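/- arXiv:1205.0849 — 2 statements merged into one kernel-verified Lean document; each statement's English description precedes it below -/
import Mathlib

section
/- Let p > 1 and let u be a nonzero global Schwartz solution of the defocusing generalized KdV equation ∂_t u + ∂_x^3 u = ∂_x(|u|^{p-1} u). Then for all t ∈ ℝ, d/dt ∫_ℝ (x − ⟨x⟩_M(t))² u²(t,x) dx = −12 E(u) (⟨x⟩_E(t) − ⟨x⟩_M(t)) − ((4p − 12)/(p+1)) ∫_ℝ (x − ⟨x⟩_M(t)) |u(t,x)|^{p+1} dx, where ⟨x⟩_M(t) = (1/M(u)) ∫ x u²(t,x) dx and ⟨x⟩_E(t) = (1/E(u)) ∫ x (½ (∂_x u)²(t,x) + |u(t,x)|^{p+1}/(p+1)) dx. -/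
open MeasureTheory Real


namespace Virial
open Filter Topology

/-- Continuous and of at most polynomial growth. -/
def Gr (F : ℝ → ℝ) : Prop :=
  Continuous F ∧ ∃ (C : ℝ) (k : ℕ), 0 ≤ C ∧ ∀ x, |F x| ≤ C * (1 + x ^ 2) ^ k

/-- Continuous and rapidly decaying. -/
def Dec (F : ℝ → ℝ) : Prop :=
  Continuous F ∧ ∀ k : ℕ, ∃ C : ℝ, 0 ≤ C ∧ ∀ x, (1 + x ^ 2) ^ k * |F x| ≤ C

lemma Gr.of_bdd {F : ℝ → ℝ} (hF : Continuous F) (C : ℝ) (h : ∀ x, |F x| ≤ C) : Gr F :=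
  ⟨hF, C, 0, (abs_nonneg _).trans (h 0), by simpa using h⟩

lemma Gr.const (c : ℝ) : Gr (fun _ => c) := Gr.of_bdd continuous_const |c| (fun _ => le_rfl)

lemma Gr.id : Gr (fun x => x) := by
  refine ⟨continuous_id, 1, 1, zero_le_one, fun x => ?_⟩
  have := sq_nonneg (|x| - 1)
  have h2 := sq_abs x
  nlinarith [abs_nonneg x]

lemma Gr.mul {F G : ℝ → ℝ} (hF : Gr F) (hG : Gr G) : Gr (fun x => F x * G x) := by
  obtain ⟨hc, C, k, hC, h⟩ := hF
  obtain ⟨hc', C', k', hC', h'⟩ := hG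
  refine ⟨hc.mul hc', C * C', k + k', by positivity, fun x => ?_⟩
  rw [abs_mul]
  calc |F x| * |G x| ≤ (C * (1 + x ^ 2) ^ k) * (C' * (1 + x ^ 2) ^ k') := by
        apply mul_le_mul (h x) (h' x) (abs_nonneg _) (by positivity)
    _ = _ := by ring

lemma Gr.add {F G : ℝ → ℝ} (hF : Gr F) (hG : Gr G) : Gr (fun x => F x + G x) := by
  obtain ⟨hc, C, k, hC, h⟩ := hF
  obtain ⟨hc', C', k', hC', h'⟩ := hG
  refine ⟨hc.add hc', C + C', k + k', by positivity, fun x => ?_⟩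
  have h1 : (1:ℝ) ≤ 1 + x ^ 2 := by nlinarith [sq_nonneg x]
  have e1 : (1 + x ^ 2) ^ k ≤ (1 + x ^ 2) ^ (k + k') := pow_le_pow_right₀ h1 (by omega)
  have e2 : (1 + x ^ 2) ^ k' ≤ (1 + x ^ 2) ^ (k + k') := pow_le_pow_right₀ h1 (by omega)
  calc |F x + G x| ≤ |F x| + |G x| := abs_add_le _ _
    _ ≤ C * (1 + x ^ 2) ^ k + C' * (1 + x ^ 2) ^ k' := add_le_add (h x) (h' x)
    _ ≤ C * (1 + x ^ 2) ^ (k + k') + C' * (1 + x ^ 2) ^ (k + k') := by gcongr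
    _ = _ := by ring

lemma Gr.neg {F : ℝ → ℝ} (hF : Gr F) : Gr (fun x => - F x) := by
  have := (Gr.const (-1)).mul hF
  simpa using this

lemma Gr.sub {F G : ℝ → ℝ} (hF : Gr F) (hG : Gr G) : Gr (fun x => F x - G x) := by
  simpa [sub_eq_add_neg] using hF.add hG.neg

lemma Gr.pow {F : ℝ → ℝ} (hF : Gr F) (n : ℕ) : Gr (fun x => F x ^ n) := by
  induction n with
  | zero => simpa using Gr.const 1
  | succ n ih => simpa [pow_succ] using ih.mul hF

lemma Gr.abs {F : ℝ → ℝ} (hF : Gr F) : Gr (fun x => |F x|) := by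
  obtain ⟨hc, C, k, hC, h⟩ := hF
  exact ⟨hc.abs, C, k, hC, by simpa using h⟩

lemma Dec.gr {F : ℝ → ℝ} (hF : Dec F) : Gr F := by
  obtain ⟨hc, h⟩ := hF
  obtain ⟨C, hC, h⟩ := h 0
  exact Gr.of_bdd hc C (by simpa using h)

lemma Dec.mul_gr {F G : ℝ → ℝ} (hF : Dec F) (hG : Gr G) : Dec (fun x => F x * G x) := by
  obtain ⟨hc, h⟩ := hF
  obtain ⟨hc', C', k', hC', h'⟩ := hG
  refine ⟨hc.mul hc', fun k => ?_⟩
  obtain ⟨C, hC, h⟩ := h (k + k')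
  refine ⟨C * C', by positivity, fun x => ?_⟩
  rw [abs_mul]
  calc (1 + x ^ 2) ^ k * (|F x| * |G x|)
      ≤ (1 + x ^ 2) ^ k * (|F x| * (C' * (1 + x ^ 2) ^ k')) := by gcongr; exact h' x
    _ = ((1 + x ^ 2) ^ (k + k') * |F x|) * C' := by ring
    _ ≤ _ := by gcongr; exact h x

lemma Dec.gr_mul {F G : ℝ → ℝ} (hF : Gr F) (hG : Dec G) : Dec (fun x => F x * G x) := by
  simpa [mul_comm] using hG.mul_gr hF

lemma Dec.add {F G : ℝ → ℝ} (hF : Dec F) (hG : Dec G) : Dec (fun x => F x + G x) := by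
  obtain ⟨hc, h⟩ := hF
  obtain ⟨hc', h'⟩ := hG
  refine ⟨hc.add hc', fun k => ?_⟩
  obtain ⟨C, hC, h⟩ := h k
  obtain ⟨C', hC', h'⟩ := h' k
  refine ⟨C + C', by positivity, fun x => ?_⟩
  calc (1 + x ^ 2) ^ k * |F x + G x| ≤ (1 + x ^ 2) ^ k * (|F x| + |G x|) := by
        gcongr; exact abs_add_le _ _
    _ ≤ _ := by rw [mul_add]; exact add_le_add (h x) (h' x)

lemma Dec.neg {F : ℝ → ℝ} (hF : Dec F) : Dec (fun x => - F x) := by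
  simpa using hF.mul_gr (Gr.const (-1))

lemma Dec.sub {F G : ℝ → ℝ} (hF : Dec F) (hG : Dec G) : Dec (fun x => F x - G x) := by
  simpa [sub_eq_add_neg] using hF.add hG.neg

lemma Dec.sq {F : ℝ → ℝ} (hF : Dec F) : Dec (fun x => F x ^ 2) := by
  simpa [pow_two] using hF.mul_gr hF.gr

lemma Dec.div_const {F : ℝ → ℝ} (hF : Dec F) (c : ℝ) : Dec (fun x => F x / c) := by
  simpa [div_eq_mul_inv] using hF.mul_gr (Gr.const c⁻¹)

lemma Dec.abs {F : ℝ → ℝ} (hF : Dec F) : Dec (fun x => |F x|) := by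
  obtain ⟨hc, h⟩ := hF
  exact ⟨hc.abs, by simpa using h⟩

lemma Dec.integrable {F : ℝ → ℝ} (hF : Dec F) : Integrable F := by
  obtain ⟨hc, h⟩ := hF
  obtain ⟨C, hC, h⟩ := h 1
  refine (integrable_inv_one_add_sq.const_mul C).mono' hc.aestronglyMeasurable
    (ae_of_all _ fun x => ?_)
  have := h x
  rw [norm_eq_abs, ← div_eq_mul_inv, le_div_iff₀ (by positivity)]
  linarith

lemma Dec.of_schwartz (f : SchwartzMap ℝ ℝ) : Dec (fun x => f x) := by
  refine ⟨f.continuous, fun k => ?_⟩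
  obtain ⟨C, hC⟩ := f.decay (2 * k) 0
  obtain ⟨C0, hC0⟩ := f.decay 0 0
  simp only [norm_iteratedFDeriv_zero, norm_eq_abs, pow_zero, one_mul] at hC hC0
  have hCn : 0 ≤ C := le_trans (by positivity) (hC.2 0)
  have hC0n : 0 ≤ C0 := le_trans (by positivity) (hC0.2 0)
  refine ⟨2 ^ k * (C0 + C), by positivity, fun x => ?_⟩
  have e : (1 + x ^ 2) ^ k ≤ 2 ^ k * (1 + |x| ^ (2 * k)) := by
    have := add_pow_le (zero_le_one (α := ℝ)) (sq_nonneg x) k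
    have h3 : (2:ℝ) ^ (k - 1) ≤ 2 ^ k := pow_le_pow_right₀ (by norm_num) (by omega)
    calc (1 + x ^ 2) ^ k ≤ 2 ^ (k - 1) * (1 ^ k + (x ^ 2) ^ k) := this
      _ ≤ 2 ^ k * (1 ^ k + (x ^ 2) ^ k) := by gcongr
      _ = _ := by rw [one_pow, pow_mul, sq_abs]
  calc (1 + x ^ 2) ^ k * |f x| ≤ (2 ^ k * (1 + |x| ^ (2 * k))) * |f x| := by gcongr
    _ = 2 ^ k * (|f x| + |x| ^ (2 * k) * |f x|) := by ring
    _ ≤ _ := by gcongr; exacts [hC0.2 x, hC.2 x]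

/-- Cauchy-Schwarz for integrals. -/
lemma abs_integral_mul_le {F G : ℝ → ℝ} (hF : Integrable (fun x => F x ^ 2))
    (hG : Integrable (fun x => G x ^ 2)) (hFG : Integrable (fun x => F x * G x)) :
    |∫ x, F x * G x| ≤ √(∫ x, F x ^ 2) * √(∫ x, G x ^ 2) := by
  set a := ∫ x, F x ^ 2
  set b := ∫ x, F x * G x
  set c := ∫ x, G x ^ 2
  have key : ∀ s : ℝ, 0 ≤ a * (s * s) + (2 * b) * s + c := by
    intro s
    have h1 : 0 ≤ ∫ x, (s * F x + G x) ^ 2 := integral_nonneg fun x => sq_nonneg _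
    have h2 : ∫ x, (s * F x + G x) ^ 2 = a * (s * s) + (2 * b) * s + c := by
      have : (fun x => (s * F x + G x) ^ 2)
          = fun x => (s * s) * F x ^ 2 + (2 * s) * (F x * G x) + G x ^ 2 := by
        funext x; ring
      have hi : Integrable (fun x => (s * s) * F x ^ 2 + (2 * s) * (F x * G x)) :=
        (hF.const_mul _).add (hFG.const_mul _)
      rw [this, integral_add hi hG,
        integral_add (hF.const_mul _) (hFG.const_mul _), integral_const_mul, integral_const_mul]
      ring
    linarith
  have hd := discrim_le_zero key
  rw [discrim] at hd
  have ha : 0 ≤ a := integral_nonneg fun x => sq_nonneg _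
  rw [← Real.sqrt_mul ha]
  apply Real.abs_le_sqrt
  nlinarith

lemma integral_deriv_zero {F F' : ℝ → ℝ} (h : ∀ x, HasDerivAt F (F' x) x) (hF : Dec F)
    (hF' : Dec F') : ∫ x, F' x = 0 :=
  integral_eq_zero_of_hasDerivAt_of_integrable h hF'.integrable hF.integrable

/-- An abstract criterion for differentiability. -/
lemma hasDerivAt_of_approx {A : ℝ → ℝ} {An : ℕ → ℝ → ℝ} {a : ℝ} {an en : ℕ → ℝ} {t : ℝ}
    (hA : ∀ n, HasDerivAt (An n) (an n) t) (ha : Tendsto an atTop (𝓝 a))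
    (he : Tendsto en atTop (𝓝 0))
    (h : ∀ n, ∀ᶠ s in 𝓝 t, |A s - A t - (An n s - An n t)| ≤ en n * |s - t|) :
    HasDerivAt A a t := by
  rw [hasDerivAt_iff_isLittleO, Asymptotics.isLittleO_iff]
  intro c hc
  have h1 : ∀ᶠ n in atTop, |an n - a| < c / 3 := by
    have := Metric.tendsto_nhds.1 ha (c / 3) (by positivity)
    simpa [Real.dist_eq] using this
  have h2 : ∀ᶠ n in atTop, |en n| < c / 3 := by
    have := Metric.tendsto_nhds.1 he (c / 3) (by positivity)
    simpa [Real.dist_eq] using this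
  obtain ⟨n, hn1, hn2⟩ := (h1.and h2).exists
  have h3 := hA n
  rw [hasDerivAt_iff_isLittleO, Asymptotics.isLittleO_iff] at h3
  filter_upwards [h n, h3 (show 0 < c / 3 by positivity)] with s hs1 hs2
  simp only [norm_eq_abs, smul_eq_mul] at *
  have e1 : A s - A t - (s - t) * a = (A s - A t - (An n s - An n t))
      + (An n s - An n t - (s - t) * an n) + (s - t) * (an n - a) := by ring
  rw [e1]
  have e2 : en n * |s - t| ≤ c / 3 * |s - t| := by
    gcongr; exact (le_abs_self _).trans hn2.le
  have e3 : |(s - t) * (an n - a)| ≤ c / 3 * |s - t| := by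
    rw [abs_mul, mul_comm]; gcongr
  have e4 := abs_add_three (A s - A t - (An n s - An n t)) (An n s - An n t - (s - t) * an n)
    ((s - t) * (an n - a))
  linarith

/-- derivative of `|x|^(p-1) x`. -/
lemma hasDerivAt_f {p : ℝ} (hp : 1 < p) (x : ℝ) :
    HasDerivAt (fun y : ℝ => |y| ^ (p - 1) * y) (p * |x| ^ (p - 1)) x := by
  rcases eq_or_ne x 0 with rfl | hx
  · have h0 : (0:ℝ) ^ (p - 1) = 0 := Real.zero_rpow (by linarith)
    rw [hasDerivAt_iff_tendsto_slope]
    simp only [abs_zero, h0, mul_zero]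
    have h1 : Tendsto (fun y : ℝ => |y| ^ (p - 1)) (𝓝[≠] 0) (𝓝 0) := by
      have : Continuous (fun y : ℝ => |y| ^ (p - 1)) :=
        continuous_abs.rpow_const (fun _ => Or.inr (by linarith))
      have h := this.tendsto 0
      simp only [abs_zero, h0] at h
      exact h.mono_left nhdsWithin_le_nhds
    refine h1.congr' ?_
    filter_upwards [self_mem_nhdsWithin] with y hy
    have hy : y ≠ 0 := hy
    simp only [slope, vsub_eq_sub, sub_zero, smul_eq_mul, mul_zero]
    field_simp
  · have h1 : HasDerivAt (fun y : ℝ => |y|) (SignType.sign x : ℝ) x := hasDerivAt_abs hx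
    have hx' : |x| ≠ 0 := abs_ne_zero.2 hx
    have h2 := (h1.rpow_const (p := p - 1) (Or.inl hx')).fun_mul (hasDerivAt_id' x)
    refine h2.congr_deriv ?_
    symm
    have e : (SignType.sign x : ℝ) * x = |x| := sign_mul_self x
    have e2 : |x| ^ (p - 1) = |x| ^ (p - 1 - 1) * |x| := by
      rw [← Real.rpow_add_one hx']; congr 1; ring
    calc p * |x| ^ (p - 1) = (p - 1) * (|x| ^ (p - 1 - 1) * |x|) + |x| ^ (p - 1) := by
          rw [← e2]; ring
      _ = _ := by rw [← e]; ring

lemma hasDerivAt_F {p : ℝ} (hp : 1 < p) (x : ℝ) :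
    HasDerivAt (fun y : ℝ => |y| ^ (p + 1)) ((p + 1) * (|x| ^ (p - 1) * x)) x := by
  have := hasDerivAt_abs_rpow x (p := p + 1) (by linarith)
  convert this using 1
  rw [show p + 1 - 2 = p - 1 by ring]; ring

lemma abs_rpow_succ {p : ℝ} (hp : 1 < p) (x : ℝ) : |x| ^ (p + 1) = |x| ^ (p - 1) * x ^ 2 := by
  rw [← sq_abs x, ← Real.rpow_two, ← Real.rpow_add_of_nonneg (abs_nonneg _) (by linarith)
    (by norm_num)]
  congr 1; ring

/-- convexity of `|x|^(p+1)/(p+1)` -/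
lemma F_convex {p : ℝ} (hp : 1 < p) (a b : ℝ) :
    0 ≤ |b| ^ (p + 1) / (p + 1) - |a| ^ (p + 1) / (p + 1) - |a| ^ (p - 1) * a * (b - a) := by
  have hq : (((p + 1) / p)).HolderConjugate (p + 1) := by
    rw [Real.holderConjugate_iff]
    refine ⟨by rw [lt_div_iff₀ (by linarith)]; linarith, ?_⟩
    field_simp
  have h := Real.young_inequality (|a| ^ (p - 1) * a) b hq
  have e1 : |(|a| ^ (p - 1) * a)| = |a| ^ p := by
    rw [abs_mul, abs_of_nonneg (by positivity : 0 ≤ |a| ^ (p - 1))]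
    rw [← Real.rpow_add_one' (abs_nonneg _) (by linarith)]
    congr 1; ring
  have e2 : (|a| ^ p) ^ ((p + 1) / p) = |a| ^ (p + 1) := by
    rw [← Real.rpow_mul (abs_nonneg _)]; congr 1; field_simp
  rw [e1, e2] at h
  have e3 := abs_rpow_succ hp a
  have e4 : |a| ^ (p + 1) / ((p + 1) / p) = |a| ^ (p + 1) - |a| ^ (p + 1) / (p + 1) := by
    field_simp; ring
  nlinarith

lemma f_lip {p : ℝ} (hp : 1 < p) {B : ℝ} {a b : ℝ} (ha : |a| ≤ B) (hb : |b| ≤ B) :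
    |(|b| ^ (p - 1) * b) - |a| ^ (p - 1) * a| ≤ p * B ^ (p - 1) * |b - a| := by
  have := (convex_Icc (-B) B).norm_image_sub_le_of_norm_hasDerivWithin_le
    (f := fun y : ℝ => |y| ^ (p - 1) * y) (f' := fun x => p * |x| ^ (p - 1))
    (C := p * B ^ (p - 1)) (x := a) (y := b)
    (fun x _ => (hasDerivAt_f hp x).hasDerivWithinAt)
    (fun x hx => by
      have : |x| ≤ B := abs_le.2 hx
      rw [norm_eq_abs, abs_of_nonneg (by positivity)]
      gcongr) (abs_le.1 ha) (abs_le.1 hb)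
  simpa [norm_eq_abs] using this

end Virial


namespace Virial
open Filter Topology

/-- The hypotheses on the solution. -/
structure Sol (p M E : ℝ) (u : ℝ → ℝ → ℝ) : Prop where
  hp : 1 < p
  smooth : ContDiff ℝ (⊤ : ℕ∞) (fun q : ℝ × ℝ => u q.1 q.2)
  sch : ∀ t : ℝ, ∃ f : SchwartzMap ℝ ℝ, ∀ x : ℝ, u t x = f x
  pde : ∀ t x : ℝ,
      deriv (fun s => u s x) t + iteratedDeriv 3 (fun y => u t y) x
        = deriv (fun y => |u t y| ^ (p - 1) * u t y) x
  hM : ∀ t : ℝ, M = ∫ x : ℝ, (u t x) ^ 2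
  hE : ∀ t : ℝ, E = ∫ x : ℝ,
      ((1 / 2) * (deriv (fun y => u t y) x) ^ 2 + |u t x| ^ (p + 1) / (p + 1))

noncomputable section
/-- first space derivative -/
def u1 (u : ℝ → ℝ → ℝ) (t x : ℝ) : ℝ := deriv (u t) x
/-- second space derivative -/
def u2 (u : ℝ → ℝ → ℝ) (t x : ℝ) : ℝ := deriv (u1 u t) x
/-- third space derivative -/
def u3 (u : ℝ → ℝ → ℝ) (t x : ℝ) : ℝ := deriv (u2 u t) x
/-- nonlinearity -/
def NN (p : ℝ) (u : ℝ → ℝ → ℝ) (t x : ℝ) : ℝ := |u t x| ^ (p - 1) * u t x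
/-- derivative of the nonlinearity -/
def N1 (p : ℝ) (u : ℝ → ℝ → ℝ) (t x : ℝ) : ℝ := p * |u t x| ^ (p - 1) * u1 u t x
/-- the power `p + 1` -/
def FF (p : ℝ) (u : ℝ → ℝ → ℝ) (t x : ℝ) : ℝ := |u t x| ^ (p + 1)
/-- time derivative -/
def ut (p : ℝ) (u : ℝ → ℝ → ℝ) (t x : ℝ) : ℝ := - u3 u t x + N1 p u t x
/-- energy density -/
def en (p : ℝ) (u : ℝ → ℝ → ℝ) (t x : ℝ) : ℝ := (1 / 2) * u1 u t x ^ 2 + FF p u t x / (p + 1)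
/-- the function `u_xx - f(u)` -/
def hh (p : ℝ) (u : ℝ → ℝ → ℝ) (t x : ℝ) : ℝ := u2 u t x - NN p u t x
end

namespace Sol
variable {p M E : ℝ} {u : ℝ → ℝ → ℝ}

lemma sch' (H : Sol p M E u) (t : ℝ) : ∃ f : SchwartzMap ℝ ℝ, u t = f ∧
    u1 u t = SchwartzMap.derivCLM ℝ ℝ f ∧
    u2 u t = SchwartzMap.derivCLM ℝ ℝ (SchwartzMap.derivCLM ℝ ℝ f) ∧
    u3 u t = SchwartzMap.derivCLM ℝ ℝ (SchwartzMap.derivCLM ℝ ℝ (SchwartzMap.derivCLM ℝ ℝ f)) := by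
  obtain ⟨f, hf⟩ := H.sch t
  have h0 : u t = f := funext hf
  have h1 : u1 u t = SchwartzMap.derivCLM ℝ ℝ f := by
    funext x; simp [u1, h0]
  have h2 : u2 u t = SchwartzMap.derivCLM ℝ ℝ (SchwartzMap.derivCLM ℝ ℝ f) := by
    funext x; rw [u2, h1]; rfl
  refine ⟨f, h0, h1, h2, ?_⟩
  funext x; rw [u3, h2]; rfl

lemma dec0 (H : Sol p M E u) (t : ℝ) : Dec (fun x => u t x) := by
  obtain ⟨f, h0, h1, h2, h3⟩ := H.sch' t; rw [h0]; exact Dec.of_schwartz _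
lemma dec1 (H : Sol p M E u) (t : ℝ) : Dec (fun x => u1 u t x) := by
  obtain ⟨f, h0, h1, h2, h3⟩ := H.sch' t; rw [h1]; exact Dec.of_schwartz _
lemma dec2 (H : Sol p M E u) (t : ℝ) : Dec (fun x => u2 u t x) := by
  obtain ⟨f, h0, h1, h2, h3⟩ := H.sch' t; rw [h2]; exact Dec.of_schwartz _
lemma dec3 (H : Sol p M E u) (t : ℝ) : Dec (fun x => u3 u t x) := by
  obtain ⟨f, h0, h1, h2, h3⟩ := H.sch' t; rw [h3]; exact Dec.of_schwartz _

lemma hd0 (H : Sol p M E u) (t x : ℝ) : HasDerivAt (fun y => u t y) (u1 u t x) x := by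
  obtain ⟨f, h0, h1, h2, h3⟩ := H.sch' t; rw [h1, h0]; exact f.hasDerivAt x
lemma hd1 (H : Sol p M E u) (t x : ℝ) : HasDerivAt (fun y => u1 u t y) (u2 u t x) x := by
  obtain ⟨f, h0, h1, h2, h3⟩ := H.sch' t; rw [h2, h1]; exact SchwartzMap.hasDerivAt _ x
lemma hd2 (H : Sol p M E u) (t x : ℝ) : HasDerivAt (fun y => u2 u t y) (u3 u t x) x := by
  obtain ⟨f, h0, h1, h2, h3⟩ := H.sch' t; rw [h3, h2]; exact SchwartzMap.hasDerivAt _ x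

lemma grP (H : Sol p M E u) (t : ℝ) : Gr (fun x => |u t x| ^ (p - 1)) := by
  have hp := H.hp
  obtain ⟨hc, h⟩ := H.dec0 t
  obtain ⟨C, hC, h⟩ := h 0
  refine Gr.of_bdd (hc.abs.rpow_const fun _ => Or.inr (by linarith)) (C ^ (p - 1)) fun x => ?_
  rw [abs_of_nonneg (by positivity)]
  have := h x
  simp only [pow_zero, one_mul] at this
  gcongr

lemma decN (H : Sol p M E u) (t : ℝ) : Dec (fun x => NN p u t x) :=
  Dec.gr_mul (H.grP t) (H.dec0 t)
lemma decN1 (H : Sol p M E u) (t : ℝ) : Dec (fun x => N1 p u t x) :=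
  Dec.gr_mul ((Gr.const p).mul (H.grP t)) (H.dec1 t)
lemma FF_eq (H : Sol p M E u) (t x : ℝ) : FF p u t x = |u t x| ^ (p - 1) * u t x ^ 2 :=
  abs_rpow_succ H.hp _
lemma FF_eq' (H : Sol p M E u) (t x : ℝ) : FF p u t x = NN p u t x * u t x := by
  rw [H.FF_eq, NN]; ring
lemma FF_nonneg (t x : ℝ) : 0 ≤ FF p u t x := by unfold FF; positivity
lemma decF (H : Sol p M E u) (t : ℝ) : Dec (fun x => FF p u t x) := by
  have : (fun x => FF p u t x) = fun x => NN p u t x * u t x := funext fun x => H.FF_eq' t x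
  rw [this]
  exact Dec.gr_mul (H.decN t).gr (H.dec0 t)
lemma decut (H : Sol p M E u) (t : ℝ) : Dec (fun x => ut p u t x) :=
  (H.dec3 t).neg.add (H.decN1 t)
lemma dech (H : Sol p M E u) (t : ℝ) : Dec (fun x => hh p u t x) :=
  (H.dec2 t).sub (H.decN t)
lemma decen (H : Sol p M E u) (t : ℝ) : Dec (fun x => en p u t x) :=
  (Dec.gr_mul (Gr.const _) (H.dec1 t).sq).add ((H.decF t).div_const _)
lemma en_nonneg (H : Sol p M E u) (t x : ℝ) : 0 ≤ en p u t x := by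
  have := H.hp
  have := FF_nonneg (p := p) (u := u) t x
  unfold en; positivity

lemma hdN (H : Sol p M E u) (t x : ℝ) : HasDerivAt (fun y => NN p u t y) (N1 p u t x) x :=
  (hasDerivAt_f H.hp (u t x)).comp x (H.hd0 t x)
lemma hdF (H : Sol p M E u) (t x : ℝ) :
    HasDerivAt (fun y => FF p u t y) ((p + 1) * NN p u t x * u1 u t x) x :=
  (hasDerivAt_F H.hp (u t x)).comp x (H.hd0 t x)
lemma hdh (H : Sol p M E u) (t x : ℝ) : HasDerivAt (fun y => hh p u t y) (- ut p u t x) x := by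
  refine ((H.hd2 t x).fun_sub (H.hdN t x)).congr_deriv ?_
  unfold ut; ring

lemma pde' (H : Sol p M E u) (t x : ℝ) : deriv (fun s => u s x) t = ut p u t x := by
  have h := H.pde t x
  have h1 : deriv (fun y => |u t y| ^ (p - 1) * u t y) x = N1 p u t x := (H.hdN t x).deriv
  have h2 : iteratedDeriv 3 (fun y => u t y) x = u3 u t x := by
    rw [iteratedDeriv_succ, iteratedDeriv_succ, iteratedDeriv_one]; rfl
  rw [h1, h2] at h
  unfold ut; linarith

lemma hdt (H : Sol p M E u) (t x : ℝ) : HasDerivAt (fun s => u s x) (ut p u t x) t := by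
  rw [← H.pde' t x]
  apply DifferentiableAt.hasDerivAt
  have : Differentiable ℝ (fun q : ℝ × ℝ => u q.1 q.2) := H.smooth.differentiable (by simp)
  exact (this.comp (f := fun s : ℝ => (s, x)) (by fun_prop)) t

lemma cont_ut (H : Sol p M E u) : Continuous (fun q : ℝ × ℝ => ut p u q.1 q.2) := by
  have hd : Differentiable ℝ (fun q : ℝ × ℝ => u q.1 q.2) := H.smooth.differentiable (by simp)
  have hc : Continuous (fun q : ℝ × ℝ => fderiv ℝ (fun q : ℝ × ℝ => u q.1 q.2) q) :=
    H.smooth.continuous_fderiv (by simp)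
  have : (fun q : ℝ × ℝ => ut p u q.1 q.2)
      = fun q => fderiv ℝ (fun q : ℝ × ℝ => u q.1 q.2) q ((1 : ℝ), (0 : ℝ)) := by
    funext q
    have h1 : HasDerivAt (fun s : ℝ => (s, q.2)) ((1 : ℝ), (0 : ℝ)) q.1 :=
      (hasDerivAt_id' q.1).prodMk (hasDerivAt_const _ _)
    have h2 := (hd (q.1, q.2)).hasFDerivAt.comp_hasDerivAt q.1 h1
    exact (H.hdt q.1 q.2).unique h2
  rw [this]
  exact hc.clm_apply continuous_const

lemma E_eq (H : Sol p M E u) (t : ℝ) : ∫ x, en p u t x = E := (H.hE t).symm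

lemma int_FF_nonneg (t : ℝ) : 0 ≤ ∫ x, FF p u t x :=
  integral_nonneg fun x => FF_nonneg t x

lemma int_u1 (H : Sol p M E u) (t : ℝ) : ∫ x, u1 u t x ^ 2 ≤ 2 * E := by
  have hp := H.hp
  rw [← H.E_eq t, ← integral_const_mul]
  apply integral_mono (H.dec1 t).sq.integrable ((H.decen t).integrable.const_mul 2)
  intro x
  have : 0 ≤ FF p u t x / (p + 1) := div_nonneg (FF_nonneg t x) (by linarith)
  simp only [en]
  linarith

lemma sup_bound (H : Sol p M E u) (t x : ℝ) : |u t x| ≤ √(M + 2 * E) := by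
  apply Real.abs_le_sqrt
  have hd : ∀ y, HasDerivAt (fun y => u t y ^ 2) (2 * u t y * u1 u t y) y := fun y => by
    refine ((H.hd0 t y).fun_pow 2).congr_deriv ?_
    simp
  have hD : Dec (fun y => 2 * u t y * u1 u t y) :=
    Dec.gr_mul ((Gr.const 2).mul (H.dec0 t).gr) (H.dec1 t)
  have htend : Tendsto (fun y => u t y ^ 2) atBot (𝓝 0) :=
    tendsto_zero_of_hasDerivAt_of_integrableOn_Iic (a := 0) (fun y _ => hd y)
      hD.integrable.integrableOn (H.dec0 t).sq.integrable.integrableOn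
  have h1 := integral_Iic_of_hasDerivAt_of_tendsto' (a := x) (fun y _ => hd y)
    hD.integrable.integrableOn htend
  rw [sub_zero] at h1
  have hInt : Integrable (fun y => u t y ^ 2 + u1 u t y ^ 2) :=
    (H.dec0 t).sq.integrable.add (H.dec1 t).sq.integrable
  calc u t x ^ 2 = ∫ y in Set.Iic x, 2 * u t y * u1 u t y := h1.symm
    _ ≤ ∫ y in Set.Iic x, (u t y ^ 2 + u1 u t y ^ 2) := by
        apply setIntegral_mono hD.integrable.integrableOn hInt.integrableOn
        intro y
        simp only
        nlinarith [sq_nonneg (u t y - u1 u t y)]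
    _ ≤ ∫ y, (u t y ^ 2 + u1 u t y ^ 2) :=
        setIntegral_le_integral hInt (ae_of_all _ fun y => by positivity)
    _ = (∫ y, u t y ^ 2) + ∫ y, u1 u t y ^ 2 :=
        integral_add (H.dec0 t).sq.integrable (H.dec1 t).sq.integrable
    _ ≤ M + 2 * E := by
        rw [← H.hM t]; linarith [H.int_u1 t]

end Sol
end Virial


namespace Virial
open Filter Topology

lemma exists_cutoff : ∃ (χ0 χ1 χ2 χ3 : ℝ → ℝ) (C : ℝ), 0 ≤ C ∧
    (∀ x, HasDerivAt χ0 (χ1 x) x) ∧ (∀ x, HasDerivAt χ1 (χ2 x) x) ∧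
    (∀ x, HasDerivAt χ2 (χ3 x) x) ∧ Continuous χ3 ∧
    (∀ x, |χ0 x| ≤ C) ∧ (∀ x, |χ1 x| ≤ C) ∧ (∀ x, |χ2 x| ≤ C) ∧ (∀ x, |χ3 x| ≤ C) ∧
    (∀ x, |x| < 1 → χ0 x = 1) ∧ (∀ x, 2 ≤ |x| → χ0 x = 0) := by
  let χ : ContDiffBump (0 : ℝ) := ⟨1, 2, by norm_num, by norm_num⟩
  have hs0 : ContDiff ℝ (⊤ : ℕ∞) (χ : ℝ → ℝ) := χ.contDiff
  have hs1 : ContDiff ℝ (⊤ : ℕ∞) (deriv (χ : ℝ → ℝ)) := (contDiff_infty_iff_deriv.1 hs0).2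
  have hs2 : ContDiff ℝ (⊤ : ℕ∞) (deriv (deriv (χ : ℝ → ℝ))) := (contDiff_infty_iff_deriv.1 hs1).2
  have hs3 : ContDiff ℝ (⊤ : ℕ∞) (deriv (deriv (deriv (χ : ℝ → ℝ)))) :=
    (contDiff_infty_iff_deriv.1 hs2).2
  have k0 : HasCompactSupport (χ : ℝ → ℝ) := χ.hasCompactSupport
  have k1 := k0.deriv
  have k2 := k1.deriv
  have k3 := k2.deriv
  obtain ⟨C0, h0⟩ := k0.exists_bound_of_continuous hs0.continuous
  obtain ⟨C1, h1⟩ := k1.exists_bound_of_continuous hs1.continuous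
  obtain ⟨C2, h2⟩ := k2.exists_bound_of_continuous hs2.continuous
  obtain ⟨C3, h3⟩ := k3.exists_bound_of_continuous hs3.continuous
  have n0 := (norm_nonneg _).trans (h0 0)
  have n1 := (norm_nonneg _).trans (h1 0)
  have n2 := (norm_nonneg _).trans (h2 0)
  have n3 := (norm_nonneg _).trans (h3 0)
  refine ⟨χ, _, _, _, C0 + C1 + C2 + C3, by positivity,
    fun x => ((hs0.differentiable (by simp)) x).hasDerivAt,
    fun x => ((hs1.differentiable (by simp)) x).hasDerivAt,
    fun x => ((hs2.differentiable (by simp)) x).hasDerivAt, hs3.continuous,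
    fun x => (h0 x).trans (by linarith), fun x => (h1 x).trans (by linarith),
    fun x => (h2 x).trans (by linarith), fun x => (h3 x).trans (by linarith), ?_, ?_⟩
  · intro x hx
    apply χ.one_of_mem_closedBall
    simp [χ, hx.le]
  · intro x hx
    apply χ.zero_of_le_dist
    simpa [χ] using hx

lemma dct {K : ℝ → ℝ} (hK : Dec K) {m : ℕ → ℝ → ℝ} {m0 : ℝ → ℝ} {B : ℝ}
    (hm : ∀ n, Continuous (m n)) (hB : ∀ n x, |m n x| ≤ B)
    (hl : ∀ x, Tendsto (fun n => m n x) atTop (𝓝 (m0 x))) :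
    Tendsto (fun n => ∫ x, K x * m n x) atTop (𝓝 (∫ x, K x * m0 x)) := by
  refine tendsto_integral_of_dominated_convergence (fun x => |K x| * B)
    (fun n => (hK.1.mul (hm n)).aestronglyMeasurable) (hK.abs.integrable.mul_const B)
    (fun n => ae_of_all _ fun x => ?_) (ae_of_all _ fun x => (hl x).const_mul _)
  rw [norm_eq_abs, abs_mul]
  gcongr
  exact hB n x

/-- scales -/
noncomputable def cc (n : ℕ) : ℝ := 1 / ((n : ℝ) + 1)
lemma cc_pos (n : ℕ) : 0 < cc n := by unfold cc; positivity
lemma cc_le (n : ℕ) : cc n ≤ 1 := by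
  unfold cc; rw [div_le_one (by positivity)]
  have : (0:ℝ) ≤ n := n.cast_nonneg
  linarith
lemma cc_tendsto : Tendsto cc atTop (𝓝 0) := tendsto_one_div_add_atTop_nhds_zero_nat

lemma tendsto_cutoff {χ0 : ℝ → ℝ} (h : ∀ x, |x| < 1 → χ0 x = 1) (x : ℝ) :
    Tendsto (fun n => χ0 (cc n * x)) atTop (𝓝 1) := by
  have h1 : Tendsto (fun n => |cc n * x|) atTop (𝓝 0) := by
    simpa using (cc_tendsto.mul_const x).abs
  refine tendsto_const_nhds.congr' ?_
  filter_upwards [h1.eventually_lt_const zero_lt_one] with n hn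
  exact (h _ hn).symm

namespace Sol
variable {p M E : ℝ} {u : ℝ → ℝ → ℝ}

lemma hasDerivAt_compact (H : Sol p M E u) {G : ℝ → ℝ} (hG : Continuous G) {R : ℝ}
    (hR : ∀ x, R ≤ |x| → G x = 0) (t : ℝ) :
    HasDerivAt (fun s => ∫ x, u s x * G x) (∫ x, ut p u t x * G x) t := by
  obtain ⟨C, hC⟩ := ((isCompact_Icc (a := t - 1) (b := t + 1)).prod
    (isCompact_Icc (a := -R) (b := R))).exists_bound_of_continuousOn H.cont_ut.continuousOn
  have hGi : Integrable G := by
    apply hG.integrable_of_hasCompactSupport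
    apply HasCompactSupport.intro (isCompact_Icc (a := -R) (b := R))
    intro x hx
    apply hR
    by_contra hlt
    exact hx (abs_le.1 (not_le.1 hlt).le)
  refine (hasDerivAt_integral_of_dominated_loc_of_deriv_le (F := fun s x => u s x * G x)
    (F' := fun s x => ut p u s x * G x) (bound := fun x => C * |G x|)
    (Metric.ball_mem_nhds t one_pos)
    (Eventually.of_forall fun s => ((H.dec0 s).1.mul hG).aestronglyMeasurable) ?_
    ((H.decut t).1.mul hG).aestronglyMeasurable (ae_of_all _ fun x s hs => ?_)
    (hGi.abs.const_mul C) (ae_of_all _ fun x s hs => (H.hdt s x).mul_const _)).2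
  · obtain ⟨C', hC', hb⟩ := (H.dec0 t).2 0
    refine (hGi.abs.const_mul C').mono' ((H.dec0 t).1.mul hG).aestronglyMeasurable
      (ae_of_all _ fun x => ?_)
    rw [norm_eq_abs, abs_mul]
    have := hb x
    simp only [pow_zero, one_mul] at this
    gcongr
  · rw [norm_eq_abs, abs_mul]
    rcases le_or_gt R |x| with h | h
    · simp [hR x h]
    · have h1 := abs_lt.1 h
      rw [Metric.mem_ball, Real.dist_eq, abs_lt] at hs
      have := hC (s, x) ⟨⟨by linarith, by linarith⟩, ⟨h1.1.le, h1.2.le⟩⟩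
      simp only [norm_eq_abs] at this
      gcongr

lemma ibp_ut (H : Sol p M E u) (t : ℝ) {G G1 G2 G3 : ℝ → ℝ} (h0 : ∀ x, HasDerivAt G (G1 x) x)
    (h1 : ∀ x, HasDerivAt G1 (G2 x) x) (h2 : ∀ x, HasDerivAt G2 (G3 x) x)
    (g0 : Gr G) (g1 : Gr G1) (g2 : Gr G2) (g3 : Gr G3) :
    ∫ x, ut p u t x * G x = ∫ x, (u t x * G3 x - NN p u t x * G1 x) := by
  have d1 : Dec (fun x => ut p u t x * G x) := (H.decut t).mul_gr g0
  have d2 : Dec (fun x => u t x * G3 x - NN p u t x * G1 x) :=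
    ((H.dec0 t).mul_gr g3).sub ((H.decN t).mul_gr g1)
  rw [← sub_eq_zero, ← integral_sub d1.integrable d2.integrable]
  apply integral_deriv_zero (F := fun x => - (u2 u t x * G x) + u1 u t x * G1 x - u t x * G2 x
    + NN p u t x * G x) _ _ (d1.sub d2)
  · intro x
    refine (((((H.hd2 t x).fun_mul (h0 x)).fun_neg.fun_add ((H.hd1 t x).fun_mul (h1 x))).fun_sub
      ((H.hd0 t x).fun_mul (h2 x))).fun_add ((H.hdN t x).fun_mul (h0 x))).congr_deriv ?_
    simp only [ut]; ring
  · exact ((((H.dec2 t).mul_gr g0).neg.add ((H.dec1 t).mul_gr g1)).sub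
      ((H.dec0 t).mul_gr g2)).add ((H.decN t).mul_gr g0)

lemma int_ut_u (H : Sol p M E u) (t : ℝ) : ∫ x, ut p u t x * u t x = 0 := by
  have hp := H.hp
  apply integral_deriv_zero (F := fun x => - (u t x * u2 u t x) + (1 / 2) * u1 u t x ^ 2
    + u t x * NN p u t x - FF p u t x * (1 / (p + 1))) _ _ ((H.decut t).mul_gr (H.dec0 t).gr)
  · intro x
    refine (((((H.hd0 t x).fun_mul (H.hd2 t x)).fun_neg.fun_add
      (((H.hd1 t x).fun_pow 2).const_mul (1 / 2))).fun_add
      ((H.hd0 t x).fun_mul (H.hdN t x))).fun_sub ((H.hdF t x).mul_const _)).congr_deriv ?_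
    simp only [ut]
    field_simp
    norm_num
    ring
  · exact ((((H.dec0 t).mul_gr (H.dec2 t).gr).neg.add
      (Dec.gr_mul (Gr.const _) (H.dec1 t).sq)).add ((H.dec0 t).mul_gr (H.decN t).gr)).sub
      ((H.decF t).mul_gr (Gr.const _))

lemma w_sq (H : Sol p M E u) (t0 t : ℝ) :
    ∫ x, (u t x - u t0 x) ^ 2 = -2 * ((∫ x, u t x * u t0 x) - ∫ x, u t0 x * u t0 x) := by
  have e : (fun x => (u t x - u t0 x) ^ 2)
      = fun x => (u t x ^ 2 - u t0 x ^ 2) + (-2) * (u t x * u t0 x - u t0 x * u t0 x) := by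
    funext x; ring
  have i1 := (H.dec0 t).sq.integrable
  have i2 := (H.dec0 t0).sq.integrable
  have i3 := ((H.dec0 t).mul_gr (H.dec0 t0).gr).integrable
  have i4 := ((H.dec0 t0).mul_gr (H.dec0 t0).gr).integrable
  have i5 : Integrable (fun x => u t x ^ 2 - u t0 x ^ 2) := i1.sub i2
  have i6 : Integrable (fun x => (-2) * (u t x * u t0 x - u t0 x * u t0 x)) :=
    (i3.sub i4).const_mul _
  rw [e, integral_add i5 i6, integral_const_mul,
    integral_sub i1 i2, integral_sub i3 i4, ← H.hM t, ← H.hM t0]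
  ring

lemma pair_bound (H : Sol p M E u) (t0 : ℝ) : ∃ K : ℝ, 0 ≤ K ∧ ∀ τ A : ℝ, 0 ≤ A →
    (∀ s ∈ Set.Icc (t0 - τ) (t0 + τ), ∫ x, (u s x - u t0 x) ^ 2 ≤ A) →
    ∀ t ∈ Set.Icc (t0 - τ) (t0 + τ),
      |(∫ x, u t x * u t0 x) - ∫ x, u t0 x * u t0 x| ≤ K * √A * τ := by
  have hp := H.hp
  obtain ⟨χ0, χ1, χ2, χ3, C, hC, k0, k1, k2, kc3, b0, b1, b2, b3, hone, hzero⟩ := exists_cutoff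
  have kc0 : Continuous χ0 := continuous_iff_continuousAt.2 fun x => (k0 x).continuousAt
  have kc1 : Continuous χ1 := continuous_iff_continuousAt.2 fun x => (k1 x).continuousAt
  have kc2 : Continuous χ2 := continuous_iff_continuousAt.2 fun x => (k2 x).continuousAt
  have resc : ∀ (f f' : ℝ → ℝ), (∀ x, HasDerivAt f (f' x) x) → ∀ c x : ℝ,
      HasDerivAt (fun x => f (c * x)) (c * f' (c * x)) x := by
    intro f f' h c x
    have := (h (c * x)).comp x ((hasDerivAt_id' x).const_mul c)
    refine this.congr_deriv ?_
    ring
  have grr : ∀ f : ℝ → ℝ, Continuous f → (∀ x, |f x| ≤ C) → ∀ c : ℝ, Gr (fun x => f (c * x)) :=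
    fun f hf hb c => Gr.of_bdd (hf.comp (continuous_const.mul continuous_id)) C fun x => hb _
  -- dominating functions
  let S3 : ℝ → ℝ := fun x => C * (|u3 u t0 x| + 3 * |u2 u t0 x| + 3 * |u1 u t0 x| + |u t0 x|)
  let S1 : ℝ → ℝ := fun x => C * (|u1 u t0 x| + |u t0 x|)
  have dS3 : Dec S3 := Dec.gr_mul (Gr.const _) ((((H.dec3 t0).abs.add
    (Dec.gr_mul (Gr.const _) (H.dec2 t0).abs)).add
    (Dec.gr_mul (Gr.const _) (H.dec1 t0).abs)).add (H.dec0 t0).abs)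
  have dS1 : Dec S1 := Dec.gr_mul (Gr.const _) ((H.dec1 t0).abs.add (H.dec0 t0).abs)
  let L := p * (√(M + 2 * E)) ^ (p - 1)
  have hL : 0 ≤ L := by positivity
  refine ⟨√(∫ x, S3 x ^ 2) + L * √(∫ x, S1 x ^ 2), by positivity, fun τ A hA hs t ht => ?_⟩
  set KK := √(∫ x, S3 x ^ 2) + L * √(∫ x, S1 x ^ 2)
  let c := cc
  let G : ℕ → ℝ → ℝ := fun n x => u t0 x * χ0 (c n * x)
  let G1 : ℕ → ℝ → ℝ := fun n x => u1 u t0 x * χ0 (c n * x) + c n * (u t0 x * χ1 (c n * x))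
  let G2 : ℕ → ℝ → ℝ := fun n x => u2 u t0 x * χ0 (c n * x) + 2 * c n * (u1 u t0 x * χ1 (c n * x))
    + c n ^ 2 * (u t0 x * χ2 (c n * x))
  let G3 : ℕ → ℝ → ℝ := fun n x => u3 u t0 x * χ0 (c n * x) + 3 * c n * (u2 u t0 x * χ1 (c n * x))
    + 3 * c n ^ 2 * (u1 u t0 x * χ2 (c n * x)) + c n ^ 3 * (u t0 x * χ3 (c n * x))
  have hG0 : ∀ n x, HasDerivAt (G n) (G1 n x) x := fun n x => by
    refine ((H.hd0 t0 x).fun_mul (resc _ _ k0 (c n) x)).congr_deriv ?_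
    simp only [G1]; ring
  have hG1 : ∀ n x, HasDerivAt (G1 n) (G2 n x) x := fun n x => by
    refine (((H.hd1 t0 x).fun_mul (resc _ _ k0 (c n) x)).fun_add
      (((H.hd0 t0 x).fun_mul (resc _ _ k1 (c n) x)).const_mul (c n))).congr_deriv ?_
    simp only [G2]; ring
  have hG2 : ∀ n x, HasDerivAt (G2 n) (G3 n x) x := fun n x => by
    refine ((((H.hd2 t0 x).fun_mul (resc _ _ k0 (c n) x)).fun_add
      (((H.hd1 t0 x).fun_mul (resc _ _ k1 (c n) x)).const_mul (2 * c n))).fun_add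
      (((H.hd0 t0 x).fun_mul (resc _ _ k2 (c n) x)).const_mul (c n ^ 2))).congr_deriv ?_
    simp only [G3]; ring
  have dG0 : ∀ n, Dec (G n) := fun n => (H.dec0 t0).mul_gr (grr _ kc0 b0 _)
  have dG1 : ∀ n, Dec (G1 n) := fun n => ((H.dec1 t0).mul_gr (grr _ kc0 b0 _)).add
    (Dec.gr_mul (Gr.const _) ((H.dec0 t0).mul_gr (grr _ kc1 b1 _)))
  have dG2 : ∀ n, Dec (G2 n) := fun n => (((H.dec2 t0).mul_gr (grr _ kc0 b0 _)).add
    (Dec.gr_mul (Gr.const _) ((H.dec1 t0).mul_gr (grr _ kc1 b1 _)))).add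
    (Dec.gr_mul (Gr.const _) ((H.dec0 t0).mul_gr (grr _ kc2 b2 _)))
  have dG3 : ∀ n, Dec (G3 n) := fun n => ((((H.dec3 t0).mul_gr (grr _ kc0 b0 _)).add
    (Dec.gr_mul (Gr.const _) ((H.dec2 t0).mul_gr (grr _ kc1 b1 _)))).add
    (Dec.gr_mul (Gr.const _) ((H.dec1 t0).mul_gr (grr _ kc2 b2 _)))).add
    (Dec.gr_mul (Gr.const _) ((H.dec0 t0).mul_gr (grr _ kc3 b3 _)))
  have cb : ∀ n, 0 ≤ c n ∧ c n ≤ 1 := fun n => ⟨(cc_pos n).le, cc_le n⟩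
  have term : ∀ (a b q : ℝ), |b| ≤ C → 0 ≤ q → q ≤ 1 → |q * (a * b)| ≤ C * |a| := by
    intro a b q hb hq hq1
    rw [abs_mul, abs_mul, abs_of_nonneg hq]
    calc q * (|a| * |b|) ≤ 1 * (|a| * C) := by gcongr
      _ = _ := by ring
  have bG1 : ∀ n x, |G1 n x| ≤ S1 x := fun n x => by
    have t1 := term (u1 u t0 x) _ 1 (b0 (c n * x)) zero_le_one le_rfl
    have t2 := term (u t0 x) _ (c n) (b1 (c n * x)) (cb n).1 (cb n).2
    rw [one_mul] at t1
    simp only [G1, S1]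
    refine (abs_add_le _ _).trans ?_
    linarith
  have bG3 : ∀ n x, |G3 n x| ≤ S3 x := fun n x => by
    have t1 := term (u3 u t0 x) _ 1 (b0 (c n * x)) zero_le_one le_rfl
    have t2 := term (u2 u t0 x) _ (c n) (b1 (c n * x)) (cb n).1 (cb n).2
    have t3 := term (u1 u t0 x) _ (c n ^ 2) (b2 (c n * x)) (by have := (cb n).1; positivity)
      (pow_le_one₀ (cb n).1 (cb n).2)
    have t4 := term (u t0 x) _ (c n ^ 3) (b3 (c n * x)) (by have := (cb n).1; positivity)
      (pow_le_one₀ (cb n).1 (cb n).2)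
    rw [one_mul] at t1
    simp only [G3, S3]
    refine (abs_add_le _ _).trans ?_
    have e := abs_add_three (u3 u t0 x * χ0 (c n * x)) (3 * c n * (u2 u t0 x * χ1 (c n * x)))
      (3 * c n ^ 2 * (u1 u t0 x * χ2 (c n * x)))
    have e2 : |3 * c n * (u2 u t0 x * χ1 (c n * x))| = 3 * |c n * (u2 u t0 x * χ1 (c n * x))| := by
      rw [mul_assoc, abs_mul]; norm_num
    have e3 : |3 * c n ^ 2 * (u1 u t0 x * χ2 (c n * x))|
        = 3 * |c n ^ 2 * (u1 u t0 x * χ2 (c n * x))| := by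
      rw [mul_assoc, abs_mul]; norm_num
    linarith
  have sqle : ∀ (a S : ℝ → ℝ), Dec a → Dec S → (∀ x, |a x| ≤ S x) →
      √(∫ x, a x ^ 2) ≤ √(∫ x, S x ^ 2) := by
    intro a S ha hS hb
    apply Real.sqrt_le_sqrt
    apply integral_mono ha.sq.integrable hS.sq.integrable
    intro x
    exact sq_le_sq' (by linarith [neg_abs_le (a x), hb x]) ((le_abs_self _).trans (hb x))
  -- derivative bound
  let cn : ℕ → ℝ := fun n => ∫ x, ut p u t0 x * G n x
  have hder : ∀ n s, HasDerivAt (fun s => ∫ x, u s x * G n x) (∫ x, ut p u s x * G n x) s := by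
    intro n s
    refine H.hasDerivAt_compact (dG0 n).1 (R := 2 / c n) (fun x hx => ?_) s
    have hc : 0 < c n := cc_pos n
    simp only [G]
    rw [hzero, mul_zero]
    rw [abs_mul, abs_of_pos hc]
    rwa [div_le_iff₀' hc] at hx
  have hbd : ∀ n, ∀ s ∈ Set.Icc (t0 - τ) (t0 + τ),
      ‖∫ x, ut p u s x * G n x‖ ≤ |cn n| + KK * √A := by
    intro n s hsI
    have e1 := H.ibp_ut s (hG0 n) (hG1 n) (hG2 n) (dG0 n).gr (dG1 n).gr (dG2 n).gr (dG3 n).gr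
    have e2 := H.ibp_ut t0 (hG0 n) (hG1 n) (hG2 n) (dG0 n).gr (dG1 n).gr (dG2 n).gr (dG3 n).gr
    have dw : Dec (fun x => u s x - u t0 x) := (H.dec0 s).sub (H.dec0 t0)
    have dN : Dec (fun x => NN p u s x - NN p u t0 x) := (H.decN s).sub (H.decN t0)
    have e3 : ∫ x, ut p u s x * G n x = cn n + ((∫ x, (u s x - u t0 x) * G3 n x)
        - ∫ x, (NN p u s x - NN p u t0 x) * G1 n x) := by
      simp only [cn]
      rw [e1, e2, ← integral_sub (dw.mul_gr (dG3 n).gr).integrable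
        (dN.mul_gr (dG1 n).gr).integrable, ← integral_add
        (((H.dec0 t0).mul_gr (dG3 n).gr).sub ((H.decN t0).mul_gr (dG1 n).gr)).integrable
        ((dw.mul_gr (dG3 n).gr).sub (dN.mul_gr (dG1 n).gr)).integrable]
      congr 1; funext x; ring
    have wA : √(∫ x, (u s x - u t0 x) ^ 2) ≤ √A := Real.sqrt_le_sqrt (hs s hsI)
    have f1 := abs_integral_mul_le dw.sq.integrable (dG3 n).sq.integrable
      (dw.mul_gr (dG3 n).gr).integrable
    have f2 := abs_integral_mul_le dN.sq.integrable (dG1 n).sq.integrable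
      (dN.mul_gr (dG1 n).gr).integrable
    have f3 : √(∫ x, (NN p u s x - NN p u t0 x) ^ 2) ≤ L * √A := by
      have : ∫ x, (NN p u s x - NN p u t0 x) ^ 2 ≤ L ^ 2 * A := by
        calc ∫ x, (NN p u s x - NN p u t0 x) ^ 2 ≤ ∫ x, L ^ 2 * (u s x - u t0 x) ^ 2 := by
              apply integral_mono dN.sq.integrable (dw.sq.integrable.const_mul _)
              intro x
              have := f_lip hp (H.sup_bound t0 x) (H.sup_bound s x)
              simp only
              rw [← mul_pow, ← sq_abs, ← sq_abs (L * _), abs_mul, abs_of_nonneg hL]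
              exact pow_le_pow_left₀ (abs_nonneg _) this 2
          _ = L ^ 2 * ∫ x, (u s x - u t0 x) ^ 2 := integral_const_mul _ _
          _ ≤ _ := by gcongr; exact hs s hsI
      calc _ ≤ √(L ^ 2 * A) := Real.sqrt_le_sqrt this
        _ = _ := by rw [Real.sqrt_mul (sq_nonneg L), Real.sqrt_sq hL]
    have q1 := sqle _ _ (dG1 n) dS1 (bG1 n)
    have q3 := sqle _ _ (dG3 n) dS3 (bG3 n)
    have r1 : |∫ x, (u s x - u t0 x) * G3 n x| ≤ √A * √(∫ x, S3 x ^ 2) :=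
      f1.trans (by gcongr)
    have r2 : |∫ x, (NN p u s x - NN p u t0 x) * G1 n x| ≤ L * √A * √(∫ x, S1 x ^ 2) :=
      f2.trans (by gcongr)
    rw [e3, norm_eq_abs]
    refine (abs_add_le _ _).trans ?_
    have r3 := abs_sub (∫ x, (u s x - u t0 x) * G3 n x)
      (∫ x, (NN p u s x - NN p u t0 x) * G1 n x)
    simp only [KK]
    nlinarith
  have hτ : 0 ≤ τ := by linarith [ht.1, ht.2]
  have hmv : ∀ n, |(∫ x, u t x * G n x) - ∫ x, u t0 x * G n x| ≤ (|cn n| + KK * √A) * τ := by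
    intro n
    have := (convex_Icc (t0 - τ) (t0 + τ)).norm_image_sub_le_of_norm_hasDerivWithin_le
      (fun s _ => (hder n s).hasDerivWithinAt) (hbd n)
      (show t0 ∈ Set.Icc (t0 - τ) (t0 + τ) from ⟨by linarith, by linarith⟩) ht
    refine this.trans ?_
    have : |t - t0| ≤ τ := abs_le.2 ⟨by linarith [ht.1], by linarith [ht.2]⟩
    rw [norm_eq_abs]
    gcongr
  -- limits
  have lim : ∀ K : ℝ → ℝ, Dec K → Tendsto (fun n => ∫ x, K x * χ0 (c n * x)) atTop
      (𝓝 (∫ x, K x)) := by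
    intro K hK
    have := dct hK (m := fun n x => χ0 (c n * x)) (m0 := fun _ => 1) (B := C)
      (fun n => kc0.comp (continuous_const.mul continuous_id)) (fun n x => b0 _)
      (fun x => tendsto_cutoff hone x)
    simpa using this
  have l1 : Tendsto (fun n => ∫ x, u t x * G n x) atTop (𝓝 (∫ x, u t x * u t0 x)) := by
    have := lim _ ((H.dec0 t).mul_gr (H.dec0 t0).gr)
    simpa [G, mul_assoc] using this
  have l2 : Tendsto (fun n => ∫ x, u t0 x * G n x) atTop (𝓝 (∫ x, u t0 x * u t0 x)) := by
    have := lim _ ((H.dec0 t0).mul_gr (H.dec0 t0).gr)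
    simpa [G, mul_assoc] using this
  have l3 : Tendsto cn atTop (𝓝 0) := by
    have := lim _ ((H.decut t0).mul_gr (H.dec0 t0).gr)
    rw [H.int_ut_u] at this
    simpa [cn, G, mul_assoc] using this
  have l4 : Tendsto (fun n => (|cn n| + KK * √A) * τ) atTop (𝓝 ((|0| + KK * √A) * τ)) :=
    (l3.abs.add_const _).mul_const _
  have := le_of_tendsto_of_tendsto' (l1.sub l2).abs l4 hmv
  simpa using this

lemma l2_lip (H : Sol p M E u) (t0 : ℝ) : ∃ C : ℝ, 0 ≤ C ∧ ∀ t,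
    ∫ x, (u t x - u t0 x) ^ 2 ≤ C * |t - t0| ^ 2 := by
  obtain ⟨K, hK, h⟩ := H.pair_bound t0
  refine ⟨(2 * K) ^ 2, by positivity, fun t => ?_⟩
  set τ := |t - t0| with hτ
  have hτ0 : 0 ≤ τ := abs_nonneg _
  let w2 : ℝ → ℝ := fun s => ∫ x, (u s x - u t0 x) ^ 2
  let S := w2 '' Set.Icc (t0 - τ) (t0 + τ)
  have hmem : t ∈ Set.Icc (t0 - τ) (t0 + τ) := by
    have := abs_le.1 hτ.ge
    exact ⟨by linarith, by linarith⟩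
  have hbdd : BddAbove S := by
    refine ⟨4 * M, ?_⟩
    rintro _ ⟨s, _, rfl⟩
    have i1 := (H.dec0 s).sq.integrable
    have i2 := (H.dec0 t0).sq.integrable
    calc w2 s ≤ ∫ x, (2 * u s x ^ 2 + 2 * u t0 x ^ 2) := by
          apply integral_mono ((H.dec0 s).sub (H.dec0 t0)).sq.integrable
            ((i1.const_mul 2).add (i2.const_mul 2))
          intro x
          simp only [Pi.add_apply]
          nlinarith [sq_nonneg (u s x + u t0 x)]
      _ = 4 * M := by
          rw [integral_add (i1.const_mul 2) (i2.const_mul 2), integral_const_mul,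
            integral_const_mul, ← H.hM s, ← H.hM t0]
          ring
  set A := sSup S with hA
  have hle : ∀ s ∈ Set.Icc (t0 - τ) (t0 + τ), w2 s ≤ A := fun s hs =>
    le_csSup hbdd ⟨s, hs, rfl⟩
  have hwn : ∀ s, 0 ≤ w2 s := fun s => integral_nonneg fun x => sq_nonneg _
  have hA0 : 0 ≤ A := (hwn t).trans (hle t hmem)
  have h2 := h τ A hA0 hle
  have h3 : A ≤ 2 * (K * √A * τ) := by
    apply csSup_le (show S.Nonempty from ⟨w2 t, t, hmem, rfl⟩)
    rintro _ ⟨s, hs, rfl⟩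
    have := h2 s hs
    have e := H.w_sq t0 s
    simp only [w2]
    rw [e]
    have := neg_abs_le ((∫ x, u s x * u t0 x) - ∫ x, u t0 x * u t0 x)
    linarith
  have h4 : √A ≤ 2 * K * τ := by
    rcases (Real.sqrt_nonneg A).eq_or_lt with h0 | h0
    · rw [← h0]; positivity
    · have : √A * √A ≤ (2 * K * τ) * √A := by
        rw [Real.mul_self_sqrt hA0]; linarith
      exact le_of_mul_le_mul_right this h0
  have h5 : A ≤ (2 * K * τ) ^ 2 := by
    calc A = √A ^ 2 := (Real.sq_sqrt hA0).symm
      _ ≤ _ := by gcongr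
  calc _ ≤ A := hle t hmem
    _ ≤ _ := h5
    _ = _ := by ring

lemma hasDerivAt_pair (H : Sol p M E u) (t : ℝ) {K : ℝ → ℝ} (hK : Dec K) :
    HasDerivAt (fun s => ∫ x, u s x * K x) (∫ x, ut p u t x * K x) t := by
  obtain ⟨χ0, χ1, χ2, χ3, C, hC, k0, k1, k2, kc3, b0, b1, b2, b3, hone, hzero⟩ := exists_cutoff
  have kc0 : Continuous χ0 := continuous_iff_continuousAt.2 fun x => (k0 x).continuousAt
  have kcn : ∀ n, Continuous (fun x => χ0 (cc n * x)) := fun n =>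
    kc0.comp (continuous_const.mul continuous_id)
  have gχ : ∀ n, Gr (fun x => χ0 (cc n * x)) := fun n => Gr.of_bdd (kcn n) C fun x => b0 _
  obtain ⟨D, hD, hlip⟩ := H.l2_lip t
  have dK : ∀ n, Dec (fun x => K x * χ0 (cc n * x)) := fun n => hK.mul_gr (gχ n)
  have dK' : ∀ n, Dec (fun x => K x * (1 - χ0 (cc n * x))) := fun n =>
    hK.mul_gr ((Gr.const 1).sub (gχ n))
  refine hasDerivAt_of_approx (An := fun n s => ∫ x, u s x * (K x * χ0 (cc n * x)))
    (an := fun n => ∫ x, ut p u t x * (K x * χ0 (cc n * x)))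
    (en := fun n => √D * √(∫ x, (K x * (1 - χ0 (cc n * x))) ^ 2)) ?_ ?_ ?_ ?_
  · intro n
    refine H.hasDerivAt_compact (dK n).1 (R := 2 / cc n) (fun x hx => ?_) t
    have hc : 0 < cc n := cc_pos n
    rw [hzero, mul_zero]
    rw [abs_mul, abs_of_pos hc]
    rwa [div_le_iff₀' hc] at hx
  · have := dct ((H.decut t).mul_gr hK.gr) (m := fun n x => χ0 (cc n * x)) (m0 := fun _ => 1)
      (B := C) kcn (fun n x => b0 _) (fun x => tendsto_cutoff hone x)
    simpa [mul_assoc] using this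
  · have h1 := dct hK.sq (m := fun n x => (1 - χ0 (cc n * x)) ^ 2) (m0 := fun _ => 0)
      (B := (1 + C) ^ 2) (fun n => (continuous_const.sub (kcn n)).pow 2) (fun n x => by
        rw [abs_pow]
        have := b0 (cc n * x)
        have h2 := abs_sub 1 (χ0 (cc n * x))
        rw [abs_one] at h2
        gcongr
        linarith) (fun x => by
        have := ((tendsto_cutoff hone x).const_sub 1).pow 2
        simpa using this)
    have h2 : Tendsto (fun n => ∫ x, (K x * (1 - χ0 (cc n * x))) ^ 2) atTop (𝓝 0) := by
      simpa [mul_pow] using h1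
    have h3 := ((Real.continuous_sqrt.tendsto 0).comp h2).const_mul (√D)
    simpa using h3
  · intro n
    refine Eventually.of_forall fun s => ?_
    have dw : Dec (fun x => u s x - u t x) := (H.dec0 s).sub (H.dec0 t)
    have e : (∫ x, u s x * K x) - (∫ x, u t x * K x)
        - ((∫ x, u s x * (K x * χ0 (cc n * x))) - ∫ x, u t x * (K x * χ0 (cc n * x)))
        = ∫ x, (u s x - u t x) * (K x * (1 - χ0 (cc n * x))) := by
      have i1 := ((H.dec0 s).mul_gr hK.gr).integrable
      have i2 := ((H.dec0 t).mul_gr hK.gr).integrable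
      have i3 := ((H.dec0 s).mul_gr (dK n).gr).integrable
      have i4 := ((H.dec0 t).mul_gr (dK n).gr).integrable
      rw [← integral_sub i1 i2, ← integral_sub i3 i4, ← integral_sub]
      · congr 1; funext x; ring
      · exact i1.sub i2
      · exact i3.sub i4
    rw [e]
    have f := abs_integral_mul_le dw.sq.integrable (dK' n).sq.integrable
      (dw.mul_gr (dK' n).gr).integrable
    have g : √(∫ x, (u s x - u t x) ^ 2) ≤ √D * |s - t| := by
      calc _ ≤ √(D * |s - t| ^ 2) := Real.sqrt_le_sqrt (hlip s)
        _ = _ := by rw [Real.sqrt_mul hD, Real.sqrt_sq (abs_nonneg _)]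
    calc _ ≤ _ := f
      _ ≤ (√D * |s - t|) * √(∫ x, (K x * (1 - χ0 (cc n * x))) ^ 2) := by gcongr
      _ = _ := by ring

end Sol
end Virial


namespace Virial
open Filter Topology

lemma hasDerivAt_rem {A L σ : ℝ → ℝ} {a B t : ℝ} (hL : HasDerivAt L a t) (hσ : HasDerivAt σ 0 t)
    (h0 : σ t = 0) (h : ∀ s, |A s - A t - (L s - L t)| ≤ B * |σ s|) : HasDerivAt A a t := by
  have hD : HasDerivAt (fun s => A s - L s) 0 t := by
    rw [hasDerivAt_iff_isLittleO] at hσ ⊢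
    refine Asymptotics.IsBigO.trans_isLittleO (Asymptotics.IsBigO.of_bound B
      (Eventually.of_forall fun s => ?_)) hσ
    simp only [smul_zero, sub_zero, h0, norm_eq_abs]
    have := h s
    rwa [show A s - L s - (A t - L t) = A s - A t - (L s - L t) by ring]
  have := hD.fun_add hL
  simpa using this

namespace Sol
variable {p M E : ℝ} {u : ℝ → ℝ → ℝ}

lemma hasDerivAt_V (H : Sol p M E u) {φ : ℝ → ℝ} (hφ : Continuous φ) {B : ℝ}
    (hB : ∀ x, |φ x| ≤ B) (t : ℝ) :
    HasDerivAt (fun s => ∫ x, φ x * u s x ^ 2) (∫ x, ut p u t x * (2 * φ x * u t x)) t := by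
  have gφ : Gr φ := Gr.of_bdd hφ B hB
  have dK : Dec (fun x => 2 * φ x * u t x) := Dec.gr_mul ((Gr.const 2).mul gφ) (H.dec0 t)
  have hσ : HasDerivAt (fun s => ∫ x, (u s x - u t x) ^ 2) 0 t := by
    have e : (fun s => ∫ x, (u s x - u t x) ^ 2)
        = fun s => -2 * ((∫ x, u s x * u t x) - ∫ x, u t x * u t x) := funext fun s => H.w_sq t s
    rw [e]
    refine (((H.hasDerivAt_pair t (H.dec0 t)).sub_const _).const_mul (-2)).congr_deriv ?_
    rw [H.int_ut_u]; ring
  refine hasDerivAt_rem (B := B) (H.hasDerivAt_pair t dK) hσ (by simp) fun s => ?_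
  have dw : Dec (fun x => u s x - u t x) := (H.dec0 s).sub (H.dec0 t)
  have i1 := (Dec.gr_mul gφ (H.dec0 s).sq).integrable
  have i2 := (Dec.gr_mul gφ (H.dec0 t).sq).integrable
  have i3 := ((H.dec0 s).mul_gr dK.gr).integrable
  have i4 := ((H.dec0 t).mul_gr dK.gr).integrable
  have i5 := (Dec.gr_mul gφ dw.sq).integrable
  have e : (∫ x, φ x * u s x ^ 2) - (∫ x, φ x * u t x ^ 2)
      - ((∫ x, u s x * (2 * φ x * u t x)) - ∫ x, u t x * (2 * φ x * u t x))
      = ∫ x, φ x * (u s x - u t x) ^ 2 := by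
    have i6 : Integrable (fun x => φ x * u s x ^ 2 - φ x * u t x ^ 2) := i1.sub i2
    have i7 : Integrable (fun x => u s x * (2 * φ x * u t x) - u t x * (2 * φ x * u t x)) :=
      i3.sub i4
    rw [← integral_sub i1 i2, ← integral_sub i3 i4, ← integral_sub i6 i7]
    congr 1; funext x; ring
  have hn : 0 ≤ ∫ x, (u s x - u t x) ^ 2 := integral_nonneg fun x => sq_nonneg _
  rw [e, abs_of_nonneg hn, ← integral_const_mul]
  refine (abs_integral_le_integral_abs).trans ?_
  apply integral_mono i5.abs (dw.sq.integrable.const_mul _)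
  intro x
  simp only [abs_mul, abs_pow, sq_abs]
  gcongr
  exact hB x

lemma V_ibp (H : Sol p M E u) {φ φ1 φ2 φ3 : ℝ → ℝ} (h0 : ∀ x, HasDerivAt φ (φ1 x) x)
    (h1 : ∀ x, HasDerivAt φ1 (φ2 x) x) (h2 : ∀ x, HasDerivAt φ2 (φ3 x) x)
    (g0 : Gr φ) (g1 : Gr φ1) (g2 : Gr φ2) (g3 : Gr φ3) (t : ℝ) :
    ∫ x, ut p u t x * (2 * φ x * u t x)
      = ∫ x, (φ3 x * u t x ^ 2 - 3 * (φ1 x * u1 u t x ^ 2) - 2 * p / (p + 1) * (φ1 x * FF p u t x)) := by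
  have hp := H.hp
  have d1 : Dec (fun x => ut p u t x * (2 * φ x * u t x)) :=
    (H.decut t).mul_gr (((Gr.const 2).mul g0).mul (H.dec0 t).gr)
  have d2 : Dec (fun x => φ3 x * u t x ^ 2 - 3 * (φ1 x * u1 u t x ^ 2)
      - 2 * p / (p + 1) * (φ1 x * FF p u t x)) :=
    ((Dec.gr_mul g3 (H.dec0 t).sq).sub (Dec.gr_mul (Gr.const 3) (Dec.gr_mul g1 (H.dec1 t).sq))).sub
      (Dec.gr_mul (Gr.const _) (Dec.gr_mul g1 (H.decF t)))
  rw [← sub_eq_zero, ← integral_sub d1.integrable d2.integrable]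
  apply integral_deriv_zero (F := fun x => - (2 * (φ x * (u t x * u2 u t x)))
    + 2 * (φ1 x * (u t x * u1 u t x)) + φ x * u1 u t x ^ 2 - φ2 x * u t x ^ 2
    + 2 * (φ x * (u t x * NN p u t x)) - 2 / (p + 1) * (φ x * FF p u t x)) _ _ (d1.sub d2)
  · intro x
    have a0 := H.hd0 t x
    have a1 := H.hd1 t x
    have a2 := H.hd2 t x
    have aN := H.hdN t x
    have aF := H.hdF t x
    refine (((((((h0 x).fun_mul (a0.fun_mul a2)).const_mul 2).fun_neg.fun_add
      (((h1 x).fun_mul (a0.fun_mul a1)).const_mul 2)).fun_add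
      ((h0 x).fun_mul (a1.fun_pow 2))).fun_sub ((h2 x).fun_mul (a0.fun_pow 2))).fun_add
      (((h0 x).fun_mul (a0.fun_mul aN)).const_mul 2)).fun_sub
      (((h0 x).fun_mul aF).const_mul (2 / (p + 1))) |>.congr_deriv ?_
    have := H.FF_eq' t x
    simp only [ut, this]
    field_simp
    norm_num
    ring
  · have k : Gr (fun x => 2 * φ x) := (Gr.const 2).mul g0
    exact (((((Dec.gr_mul (Gr.const 2) (Dec.gr_mul g0 ((H.dec0 t).mul_gr (H.dec2 t).gr))).neg.add
      (Dec.gr_mul (Gr.const 2) (Dec.gr_mul g1 ((H.dec0 t).mul_gr (H.dec1 t).gr)))).add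
      (Dec.gr_mul g0 (H.dec1 t).sq)).sub (Dec.gr_mul g2 (H.dec0 t).sq)).add
      (Dec.gr_mul (Gr.const 2) (Dec.gr_mul g0 ((H.dec0 t).mul_gr (H.decN t).gr)))).sub
      (Dec.gr_mul (Gr.const _) (Dec.gr_mul g0 (H.decF t)))

/-- Taylor remainder of the energy density -/
lemma R_nonneg (H : Sol p M E u) (s t x : ℝ) :
    0 ≤ en p u s x - en p u t x - u1 u t x * (u1 u s x - u1 u t x)
      - NN p u t x * (u s x - u t x) := by
  have := F_convex H.hp (u t x) (u s x)
  simp only [en, FF, NN]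
  nlinarith [sq_nonneg (u1 u s x - u1 u t x)]

/-- First variation of the localised energy. -/
lemma R_int (H : Sol p M E u) {ψ ψ1 : ℝ → ℝ} (h0 : ∀ x, HasDerivAt ψ (ψ1 x) x) (g0 : Gr ψ)
    (g1 : Gr ψ1) (s t : ℝ) :
    ∫ x, ψ x * (en p u s x - en p u t x - u1 u t x * (u1 u s x - u1 u t x)
      - NN p u t x * (u s x - u t x)) =
    (∫ x, ψ x * en p u s x) - (∫ x, ψ x * en p u t x)
      - ((∫ x, u s x * (- (ψ x * hh p u t x) - ψ1 x * u1 u t x))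
        - ∫ x, u t x * (- (ψ x * hh p u t x) - ψ1 x * u1 u t x)) := by
  have dK : Dec (fun x => - (ψ x * hh p u t x) - ψ1 x * u1 u t x) :=
    (Dec.gr_mul g0 (H.dech t)).neg.sub (Dec.gr_mul g1 (H.dec1 t))
  have dw : Dec (fun x => u s x - u t x) := (H.dec0 s).sub (H.dec0 t)
  have dw1 : Dec (fun x => u1 u s x - u1 u t x) := (H.dec1 s).sub (H.dec1 t)
  have dR : Dec (fun x => ψ x * (en p u s x - en p u t x - u1 u t x * (u1 u s x - u1 u t x)
      - NN p u t x * (u s x - u t x))) := Dec.gr_mul g0 ((((H.decen s).sub (H.decen t)).sub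
        ((H.dec1 t).mul_gr dw1.gr)).sub ((H.decN t).mul_gr dw.gr))
  have i1 := (Dec.gr_mul g0 (H.decen s))
  have i2 := (Dec.gr_mul g0 (H.decen t))
  have i3 := ((H.dec0 s).mul_gr dK.gr)
  have i4 := ((H.dec0 t).mul_gr dK.gr)
  rw [← integral_sub i1.integrable i2.integrable, ← integral_sub i3.integrable i4.integrable,
    ← integral_sub (i1.sub i2).integrable (i3.sub i4).integrable, ← sub_eq_zero,
    ← integral_sub dR.integrable ((i1.sub i2).sub (i3.sub i4)).integrable]
  apply integral_deriv_zero (F := fun x => - (ψ x * (u1 u t x * (u s x - u t x)))) _ _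
    (dR.sub ((i1.sub i2).sub (i3.sub i4)))
  · intro x
    refine ((h0 x).fun_mul ((H.hd1 t x).fun_mul ((H.hd0 s x).fun_sub (H.hd0 t x)))).fun_neg.congr_deriv ?_
    simp only [hh]
    ring
  · exact (Dec.gr_mul g0 ((H.dec1 t).mul_gr dw.gr)).neg

lemma int_ut_h (H : Sol p M E u) (t : ℝ) : ∫ x, ut p u t x * hh p u t x = 0 := by
  apply integral_deriv_zero (F := fun x => - (1 / 2) * hh p u t x ^ 2) _
    (Dec.gr_mul (Gr.const _) (H.dech t).sq) ((H.decut t).mul_gr (H.dech t).gr)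
  intro x
  refine (((H.hdh t x).fun_pow 2).const_mul _).congr_deriv ?_
  norm_num
  ring

lemma hasDerivAt_I (H : Sol p M E u) {ψ ψ1 : ℝ → ℝ} (h0 : ∀ x, HasDerivAt ψ (ψ1 x) x)
    {B : ℝ} (hB : ∀ x, |ψ x| ≤ B) (g1 : Gr ψ1) (t : ℝ) :
    HasDerivAt (fun s => ∫ x, ψ x * en p u s x)
      (∫ x, ut p u t x * (- (ψ x * hh p u t x) - ψ1 x * u1 u t x)) t := by
  have g0 : Gr ψ := Gr.of_bdd (continuous_iff_continuousAt.2 fun x => (h0 x).continuousAt) B hB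
  have dK : Dec (fun x => - (ψ x * hh p u t x) - ψ1 x * u1 u t x) :=
    (Dec.gr_mul g0 (H.dech t)).neg.sub (Dec.gr_mul g1 (H.dec1 t))
  let R : ℝ → ℝ → ℝ := fun s x => en p u s x - en p u t x - u1 u t x * (u1 u s x - u1 u t x)
      - NN p u t x * (u s x - u t x)
  have dR : ∀ s, Dec (R s) := fun s => (((H.decen s).sub (H.decen t)).sub
        ((H.dec1 t).mul_gr ((H.dec1 s).sub (H.dec1 t)).gr)).sub
        ((H.decN t).mul_gr ((H.dec0 s).sub (H.dec0 t)).gr)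
  have eR : ∀ s, ∫ x, R s x = (∫ x, u s x * hh p u t x) - ∫ x, u t x * hh p u t x := by
    intro s
    have := H.R_int (ψ := fun _ => 1) (ψ1 := fun _ => 0) (fun x => hasDerivAt_const x 1)
      (Gr.const 1) (Gr.const 0) s t
    simp only [one_mul, zero_mul, sub_zero, H.E_eq, mul_neg, integral_neg] at this
    simp only [R]
    rw [this]; ring
  have hσ : HasDerivAt (fun s => ∫ x, R s x) 0 t := by
    rw [funext eR]
    refine ((H.hasDerivAt_pair t (H.dech t)).sub_const _).congr_deriv (H.int_ut_h t)
  refine hasDerivAt_rem (B := B) (H.hasDerivAt_pair t dK) hσ (by rw [eR]; ring) fun s => ?_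
  have hn : 0 ≤ ∫ x, R s x := integral_nonneg fun x => H.R_nonneg s t x
  rw [← H.R_int h0 g0 g1 s t, abs_of_nonneg hn,
    ← integral_const_mul]
  refine (abs_integral_le_integral_abs).trans ?_
  apply integral_mono (Dec.gr_mul g0 (dR s)).integrable.abs ((dR s).integrable.const_mul _)
  intro x
  simp only [abs_mul]
  rw [abs_of_nonneg (H.R_nonneg s t x)]
  exact mul_le_mul_of_nonneg_right (hB x) (H.R_nonneg s t x)

lemma I_ibp (H : Sol p M E u) {ψ ψ1 ψ2 : ℝ → ℝ} (h0 : ∀ x, HasDerivAt ψ (ψ1 x) x)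
    (h1 : ∀ x, HasDerivAt ψ1 (ψ2 x) x) (g0 : Gr ψ) (g1 : Gr ψ1) (g2 : Gr ψ2) (t : ℝ) :
    ∫ x, ut p u t x * (- (ψ x * hh p u t x) - ψ1 x * u1 u t x)
      = ∫ x, (- (3 / 2) * (ψ1 x * hh p u t x ^ 2) - ψ2 x * (u1 u t x * hh p u t x)
        - ψ1 x * (NN p u t x * hh p u t x)) := by
  have d1 : Dec (fun x => ut p u t x * (- (ψ x * hh p u t x) - ψ1 x * u1 u t x)) :=
    (H.decut t).mul_gr ((Dec.gr_mul g0 (H.dech t)).neg.sub (Dec.gr_mul g1 (H.dec1 t))).gr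
  have d2 : Dec (fun x => - (3 / 2) * (ψ1 x * hh p u t x ^ 2) - ψ2 x * (u1 u t x * hh p u t x)
        - ψ1 x * (NN p u t x * hh p u t x)) :=
    ((Dec.gr_mul (Gr.const _) (Dec.gr_mul g1 (H.dech t).sq)).sub
      (Dec.gr_mul g2 ((H.dec1 t).mul_gr (H.dech t).gr))).sub
      (Dec.gr_mul g1 ((H.decN t).mul_gr (H.dech t).gr))
  rw [← sub_eq_zero, ← integral_sub d1.integrable d2.integrable]
  apply integral_deriv_zero (F := fun x => (1 / 2) * (ψ x * hh p u t x ^ 2)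
    + ψ1 x * (u1 u t x * hh p u t x)) _ _ (d1.sub d2)
  · intro x
    refine ((((h0 x).fun_mul ((H.hdh t x).fun_pow 2)).const_mul _).fun_add
      ((h1 x).fun_mul ((H.hd1 t x).fun_mul (H.hdh t x)))).congr_deriv ?_
    have : u2 u t x = hh p u t x + NN p u t x := by simp [hh]
    rw [this]
    norm_num
    ring
  · exact (Dec.gr_mul (Gr.const _) (Dec.gr_mul g0 (H.dech t).sq)).add
      (Dec.gr_mul g1 ((H.dec1 t).mul_gr (H.dech t).gr))

end Sol
end Virial


namespace Virial
open Filter Topology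

/-- the bracket -/
noncomputable def br (x : ℝ) : ℝ := √(1 + x ^ 2)
lemma br_sq (x : ℝ) : br x ^ 2 = 1 + x ^ 2 := Real.sq_sqrt (by positivity)
lemma br_pos (x : ℝ) : 0 < br x := Real.sqrt_pos.2 (by positivity)
lemma br_one_le (x : ℝ) : 1 ≤ br x := by
  rw [br, Real.one_le_sqrt]; nlinarith [sq_nonneg x]
lemma br_cont : Continuous br := by unfold br; fun_prop
lemma br_gr : Gr br := by
  refine ⟨br_cont, 1, 1, zero_le_one, fun x => ?_⟩
  rw [abs_of_pos (br_pos x), ← br_sq]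
  nlinarith [br_one_le x]
lemma br_deriv (x : ℝ) : HasDerivAt br (x / br x) x := by
  have h : HasDerivAt (fun y : ℝ => 1 + y ^ 2) (2 * x) x := by
    simpa using ((hasDerivAt_id' x).fun_pow 2).const_add 1
  refine (h.sqrt (by positivity)).congr_deriv ?_
  unfold br; field_simp

lemma abs_lt_br (x : ℝ) : |x| < br x := by
  rw [br]; apply Real.lt_sqrt_of_sq_lt; rw [sq_abs]; linarith

/-- `r - σ x` -/
noncomputable def qq (σ x : ℝ) : ℝ := br x - σ * x
lemma qq_mul {σ : ℝ} (hσ : σ ^ 2 = 1) (x : ℝ) : qq σ x * (br x + σ * x) = 1 := by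
  have := br_sq x
  unfold qq; linear_combination this - hσ * x ^ 2
lemma qq_ne {σ : ℝ} (hσ : σ ^ 2 = 1) (x : ℝ) : qq σ x ≠ 0 :=
  left_ne_zero_of_mul_eq_one (qq_mul hσ x)
lemma qq_cont (σ : ℝ) : Continuous (qq σ) := by
  have := br_cont
  unfold qq; fun_prop
lemma qq_deriv {σ : ℝ} (hσ : σ ^ 2 = 1) (x : ℝ) : HasDerivAt (qq σ) (- σ * qq σ x / br x) x := by
  have h : HasDerivAt (fun y : ℝ => σ * y) σ x := by
    simpa using (hasDerivAt_id' x).const_mul σ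
  refine ((br_deriv x).fun_sub h).congr_deriv ?_
  have := (br_pos x).ne'
  unfold qq
  field_simp
  linear_combination -x * hσ

/-- weight -/
noncomputable def wt (σ ε x : ℝ) : ℝ := 1 / (ε + qq σ x ^ 2)
/-- derivative of the weight -/
noncomputable def wt1 (σ ε x : ℝ) : ℝ := 2 * σ * qq σ x ^ 2 / (br x * (ε + qq σ x ^ 2) ^ 2)
/-- second derivative of the weight -/
noncomputable def wt2 (σ ε x : ℝ) : ℝ :=
  wt1 σ ε x * ((-2 * σ + 4 * σ * (qq σ x ^ 2 / (ε + qq σ x ^ 2))) / br x - x / br x ^ 2)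

lemma wt_deriv {σ ε : ℝ} (hσ : σ ^ 2 = 1) (hε : 0 < ε) (x : ℝ) :
    HasDerivAt (wt σ ε) (wt1 σ ε x) x := by
  have h := (((qq_deriv hσ x).fun_pow 2).const_add ε)
  have hD : ε + qq σ x ^ 2 ≠ 0 := by positivity
  have := (hasDerivAt_const x (1:ℝ)).fun_div h hD
  refine this.congr_deriv ?_
  have := (br_pos x).ne'
  unfold wt1
  norm_num
  field_simp

lemma wt1_deriv {σ ε : ℝ} (hσ : σ ^ 2 = 1) (hε : 0 < ε) (x : ℝ) :
    HasDerivAt (wt1 σ ε) (wt2 σ ε x) x := by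
  have hq := (qq_deriv hσ x)
  have h := ((hq.fun_pow 2).const_add ε).fun_pow 2
  have hD : ε + qq σ x ^ 2 ≠ 0 := by positivity
  have hb := (br_pos x).ne'
  have := ((hq.fun_pow 2).const_mul (2 * σ)).fun_div ((br_deriv x).fun_mul h) (by positivity)
  refine this.congr_deriv ?_
  unfold wt2 wt1
  norm_num
  field_simp
  ring

lemma wt_cont {σ ε : ℝ} (hσ : σ ^ 2 = 1) (hε : 0 < ε) : Continuous (wt σ ε) :=
  continuous_iff_continuousAt.2 fun x => (wt_deriv hσ hε x).continuousAt
lemma wt1_cont {σ ε : ℝ} (hσ : σ ^ 2 = 1) (hε : 0 < ε) : Continuous (wt1 σ ε) :=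
  continuous_iff_continuousAt.2 fun x => (wt1_deriv hσ hε x).continuousAt
lemma wt2_cont {σ ε : ℝ} (hσ : σ ^ 2 = 1) (hε : 0 < ε) : Continuous (wt2 σ ε) := by
  have h1 := wt1_cont hσ hε
  have h2 := br_cont
  have h3 := qq_cont σ
  have hD : ∀ x, ε + qq σ x ^ 2 ≠ 0 := fun x => by positivity
  have hb : ∀ x, br x ≠ 0 := fun x => (br_pos x).ne'
  have hb2 : ∀ x, br x ^ 2 ≠ 0 := fun x => pow_ne_zero 2 (hb x)
  unfold wt2
  exact h1.mul (((continuous_const.add (continuous_const.mul ((h3.pow 2).div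
    (continuous_const.add (h3.pow 2)) hD))).div h2 hb).sub (continuous_id.div (h2.pow 2) hb2))

lemma wt_pos {σ ε : ℝ} (hε : 0 < ε) (x : ℝ) : 0 < wt σ ε x := by unfold wt; positivity
lemma wt_le {σ ε : ℝ} (hε : 0 < ε) (x : ℝ) : wt σ ε x ≤ 1 / ε := by
  unfold wt; gcongr; nlinarith [sq_nonneg (qq σ x)]
lemma wt1_sign {σ ε : ℝ} (x : ℝ) : 0 ≤ σ * wt1 σ ε x := by
  have := br_pos x
  have e : σ * wt1 σ ε x = σ ^ 2 * (2 * qq σ x ^ 2 / (br x * (ε + qq σ x ^ 2) ^ 2)) := by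
    unfold wt1; ring
  rw [e]; positivity
lemma frac_le {σ ε : ℝ} (hε : 0 < ε) (x : ℝ) :
    0 ≤ qq σ x ^ 2 / (ε + qq σ x ^ 2) ∧ qq σ x ^ 2 / (ε + qq σ x ^ 2) ≤ 1 := by
  refine ⟨by positivity, ?_⟩
  rw [div_le_one (by positivity)]; linarith

lemma wt1_le {σ ε : ℝ} (hσ : σ ^ 2 = 1) (hε : 0 < ε) (x : ℝ) : σ * wt1 σ ε x ≤ 2 * wt σ ε x := by
  have e : σ * wt1 σ ε x = σ ^ 2 * ((2 * wt σ ε x) * ((qq σ x ^ 2 / (ε + qq σ x ^ 2)) * (1 / br x))) := by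
    have := (br_pos x).ne'
    have hD : ε + qq σ x ^ 2 ≠ 0 := by positivity
    unfold wt1 wt; field_simp
  rw [e, hσ, one_mul]
  have h1 := frac_le (σ := σ) hε x
  have h2 : 1 / br x ≤ 1 := by rw [div_le_one (br_pos x)]; exact br_one_le x
  have h3 : 0 ≤ 1 / br x := by have := br_pos x; positivity
  have h4 := wt_pos (σ := σ) hε x
  exact mul_le_of_le_one_right (by positivity) (mul_le_one₀ h1.2 h3 h2)

lemma wt2_le {σ ε : ℝ} (hσ : σ ^ 2 = 1) (hε : 0 < ε) (x : ℝ) :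
    |wt2 σ ε x| ≤ 3 * (σ * wt1 σ ε x) := by
  have hs : |σ| = 1 := by rw [← sq_eq_sq₀ (abs_nonneg _) zero_le_one, sq_abs, hσ, one_pow]
  have h0 : |wt1 σ ε x| = σ * wt1 σ ε x := by
    rw [← abs_of_nonneg (wt1_sign (σ := σ) (ε := ε) x), abs_mul, hs, one_mul]
  rw [wt2, abs_mul, h0, mul_comm]
  refine mul_le_mul_of_nonneg_right ?_ (wt1_sign x)
  have hb := br_pos x
  have hb1 := br_one_le x
  have h1 := frac_le (σ := σ) hε x
  refine (abs_sub _ _).trans ?_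
  have a1 : |(-2 * σ + 4 * σ * (qq σ x ^ 2 / (ε + qq σ x ^ 2))) / br x| ≤ 2 := by
    rw [abs_div, abs_of_pos hb, div_le_iff₀ hb, show -2 * σ + 4 * σ * (qq σ x ^ 2 / (ε + qq σ x ^ 2))
      = σ * (-2 + 4 * (qq σ x ^ 2 / (ε + qq σ x ^ 2))) by ring, abs_mul, hs, one_mul, abs_le]
    constructor <;> linarith
  have a2 : |x / br x ^ 2| ≤ 1 := by
    rw [abs_div, abs_of_pos (pow_pos hb 2), div_le_one (by positivity)]
    nlinarith [abs_lt_br x]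
  linarith

namespace Sol
variable {p M E : ℝ} {u : ℝ → ℝ → ℝ}

/-- Gronwall constant -/
noncomputable def Cg (p M E : ℝ) : ℝ := 18 + (p + 1) * (√(M + 2 * E)) ^ (p - 1)

lemma kato (H : Sol p M E u) {σ ε : ℝ} (hσ : σ ^ 2 = 1) (hε : 0 < ε) (t : ℝ) :
    ∃ I', HasDerivAt (fun s => ∫ x, wt σ ε x * en p u s x) I' t ∧
      σ * I' ≤ Cg p M E * ∫ x, wt σ ε x * en p u t x := by
  have hp := H.hp
  have hs : |σ| = 1 := by rw [← sq_eq_sq₀ (abs_nonneg _) zero_le_one, sq_abs, hσ, one_pow]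
  have h0 : ∀ x, |wt1 σ ε x| = σ * wt1 σ ε x := fun x => by
    rw [← abs_of_nonneg (wt1_sign (σ := σ) (ε := ε) x), abs_mul, hs, one_mul]
  have b0 : ∀ x, |wt σ ε x| ≤ 1 / ε := fun x => by rw [abs_of_pos (wt_pos hε x)]; exact wt_le hε x
  have g0 : Gr (wt σ ε) := Gr.of_bdd (wt_cont hσ hε) _ b0
  have b1 : ∀ x, |wt1 σ ε x| ≤ 2 * (1 / ε) := fun x => by
    rw [h0]; have := wt1_le hσ hε x; have := wt_le (σ := σ) hε x; linarith
  have g1 : Gr (wt1 σ ε) := Gr.of_bdd (wt1_cont hσ hε) _ b1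
  have g2 : Gr (wt2 σ ε) := Gr.of_bdd (wt2_cont hσ hε) (3 * (2 * (1 / ε))) fun x => by
    have := wt2_le hσ hε x; have := b1 x; rw [h0] at this; linarith
  refine ⟨_, H.hasDerivAt_I (wt_deriv hσ hε) b0 g1 t, ?_⟩
  rw [H.I_ibp (wt_deriv hσ hε) (wt1_deriv hσ hε) g0 g1 g2 t, ← integral_const_mul,
    ← integral_const_mul]
  have d2 : Dec (fun x => - (3 / 2) * (wt1 σ ε x * hh p u t x ^ 2)
        - wt2 σ ε x * (u1 u t x * hh p u t x) - wt1 σ ε x * (NN p u t x * hh p u t x)) :=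
    ((Dec.gr_mul (Gr.const _) (Dec.gr_mul g1 (H.dech t).sq)).sub
      (Dec.gr_mul g2 ((H.dec1 t).mul_gr (H.dech t).gr))).sub
      (Dec.gr_mul g1 ((H.decN t).mul_gr (H.dech t).gr))
  apply integral_mono (d2.integrable.const_mul _) ((Dec.gr_mul g0 (H.decen t)).integrable.const_mul _)
  intro x
  simp only
  set h := hh p u t x
  set v := u1 u t x
  set N := NN p u t x with hN
  set a := σ * wt1 σ ε x with ha
  have ha0 : 0 ≤ a := wt1_sign x
  have hw := wt_pos (σ := σ) hε x
  have haw : a ≤ 2 * wt σ ε x := wt1_le hσ hε x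
  have hw2 : |wt2 σ ε x| ≤ 3 * a := wt2_le hσ hε x
  have e1 : -(σ * wt2 σ ε x * (v * h)) ≤ 3 * a * (|v| * |h|) := by
    refine (neg_le_abs _).trans ?_
    rw [abs_mul, abs_mul, abs_mul, hs, one_mul]
    gcongr
  have e2 : -(a * (N * h)) ≤ a * (|N| * |h|) := by
    refine (neg_le_abs _).trans ?_
    rw [abs_mul a, abs_mul N, abs_of_nonneg ha0]
  have e3 : |v| * |h| ≤ 3 / 2 * v ^ 2 + 1 / 6 * h ^ 2 := by
    rw [← sq_abs v, ← sq_abs h]; nlinarith [sq_nonneg (3 * |v| - |h|)]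
  have e4 : |N| * |h| ≤ 1 / 2 * N ^ 2 + 1 / 2 * h ^ 2 := by
    rw [← sq_abs N, ← sq_abs h]; nlinarith [sq_nonneg (|N| - |h|)]
  have e5 : N ^ 2 ≤ (√(M + 2 * E)) ^ (p - 1) * FF p u t x := by
    have : N ^ 2 = |u t x| ^ (p - 1) * FF p u t x := by rw [H.FF_eq, hN, NN]; ring
    rw [this]
    have := FF_nonneg (p := p) (u := u) t x
    have := H.sup_bound t x
    gcongr
  set B := (√(M + 2 * E)) ^ (p - 1) with hB
  have hB0 : 0 ≤ B := by positivity
  have hF := FF_nonneg (p := p) (u := u) t x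
  calc σ * (- (3 / 2) * (wt1 σ ε x * h ^ 2) - wt2 σ ε x * (v * h) - wt1 σ ε x * (N * h))
      = - (3 / 2) * a * h ^ 2 + -(σ * wt2 σ ε x * (v * h)) + -(a * (N * h)) := by rw [ha]; ring
    _ ≤ - (3 / 2) * a * h ^ 2 + 3 * a * (3 / 2 * v ^ 2 + 1 / 6 * h ^ 2)
        + a * (1 / 2 * N ^ 2 + 1 / 2 * h ^ 2) := by
        have := mul_le_mul_of_nonneg_left e3 (show 0 ≤ 3 * a by positivity)
        have := mul_le_mul_of_nonneg_left e4 ha0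
        linarith
    _ ≤ a * (9 / 2 * v ^ 2 + 1 / 2 * N ^ 2) := by nlinarith [mul_nonneg ha0 (sq_nonneg h)]
    _ ≤ (2 * wt σ ε x) * (9 / 2 * v ^ 2 + 1 / 2 * (B * FF p u t x)) := by gcongr
    _ ≤ (2 * wt σ ε x) * (1 / 2 * (Cg p M E * en p u t x)) := by
        have e6 : Cg p M E * en p u t x = 9 * v ^ 2 + B * FF p u t x + 18 * (FF p u t x / (p + 1))
            + (p + 1) * B * (1 / 2 * v ^ 2) := by
          have : p + 1 ≠ 0 := by linarith
          simp only [Cg, en]; field_simp; ring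
        have : 0 ≤ 18 * (FF p u t x / (p + 1)) := by positivity
        have : 0 ≤ (p + 1) * B * (1 / 2 * v ^ 2) := by positivity
        gcongr
        linarith
    _ = _ := by ring

lemma gronwall (H : Sol p M E u) {σ ε : ℝ} (hσ : σ ^ 2 = 1) (hε : 0 < ε) {t0 t : ℝ}
    (ht : |t - t0| ≤ 1) :
    ∫ x, wt σ ε x * en p u t x
      ≤ exp (2 * Cg p M E) * ∫ x, wt σ ε x * en p u (t0 - σ) x := by
  have hp := H.hp
  have hs : |σ| = 1 := by rw [← sq_eq_sq₀ (abs_nonneg _) zero_le_one, sq_abs, hσ, one_pow]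
  choose I' hI hle using fun t => H.kato hσ hε t
  set I : ℝ → ℝ := fun s => ∫ x, wt σ ε x * en p u s x with hIdef
  set C := Cg p M E with hC
  have hC0 : 0 ≤ C := by rw [hC, Cg]; positivity
  have hI0 : ∀ s, 0 ≤ I s := fun s => integral_nonneg fun x =>
    mul_nonneg (wt_pos hε x).le (H.en_nonneg s x)
  have hg : ∀ τ, HasDerivAt (fun τ => exp (-C * τ) * I (σ * τ))
      (exp (-C * τ) * (σ * I' (σ * τ) - C * I (σ * τ))) τ := by
    intro τ
    have h1 : HasDerivAt (fun y : ℝ => σ * y) σ τ := by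
      simpa using (hasDerivAt_id' τ).const_mul σ
    have h2 : HasDerivAt (fun y : ℝ => -C * y) (-C) τ := by
      simpa using (hasDerivAt_id' τ).const_mul (-C)
    have h3 : HasDerivAt (fun τ => I (σ * τ)) (I' (σ * τ) * σ) τ := (hI (σ * τ)).comp τ h1
    refine (h2.exp.fun_mul h3).congr_deriv ?_
    ring
  have hanti : Antitone (fun τ => exp (-C * τ) * I (σ * τ)) := by
    apply antitone_of_deriv_nonpos fun τ => (hg τ).differentiableAt
    intro τ
    rw [(hg τ).deriv]
    exact mul_nonpos_of_nonneg_of_nonpos (exp_pos _).le (by linarith [hle (σ * τ)])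
  have hst : |σ * t - σ * t0| ≤ 1 := by rw [← mul_sub, abs_mul, hs, one_mul]; exact ht
  have hst := abs_le.1 hst
  have h := hanti (show σ * t0 - 1 ≤ σ * t by linarith)
  simp only at h
  have e1 : σ * (σ * t) = t := by linear_combination t * hσ
  have e2 : σ * (σ * t0 - 1) = t0 - σ := by linear_combination t0 * hσ
  rw [e1, e2] at h
  have e3 : I t = exp (C * (σ * t)) * (exp (-C * (σ * t)) * I t) := by
    rw [← mul_assoc, ← exp_add]; ring_nf; simp
  change I t ≤ _ * I (t0 - σ)
  rw [e3]
  calc _ ≤ exp (C * (σ * t)) * (exp (-C * (σ * t0 - 1)) * I (t0 - σ)) := by gcongr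
    _ = exp (C * (σ * t) + -C * (σ * t0 - 1)) * I (t0 - σ) := by rw [exp_add]; ring
    _ ≤ _ := by
      gcongr
      · exact hI0 _
      · nlinarith

lemma br_moment (H : Sol p M E u) {σ : ℝ} (hσ : σ ^ 2 = 1) (t0 : ℝ) : ∃ A, ∀ t, |t - t0| ≤ 1 →
    ∫ x, (br x + σ * x) ^ 2 * en p u t x ≤ A := by
  refine ⟨exp (2 * Cg p M E) * ∫ x, (br x + σ * x) ^ 2 * en p u (t0 - σ) x, fun t ht => ?_⟩
  have gb : Gr (fun x => (br x + σ * x) ^ 2) := (br_gr.add ((Gr.const σ).mul Gr.id)).pow 2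
  have fr : ∀ ε x, 0 < ε → wt σ ε x = (br x + σ * x) ^ 2 * (qq σ x ^ 2 / (ε + qq σ x ^ 2)) := by
    intro ε x hε
    have := qq_mul hσ x
    have h2 : (br x + σ * x) ^ 2 * qq σ x ^ 2 = 1 := by rw [← mul_pow, mul_comm, this, one_pow]
    rw [← mul_div_assoc, h2, wt]
  have key : ∀ n, ∫ x, (br x + σ * x) ^ 2 * en p u t x * (qq σ x ^ 2 / (cc n + qq σ x ^ 2))
      ≤ exp (2 * Cg p M E) * ∫ x, (br x + σ * x) ^ 2 * en p u (t0 - σ) x := by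
    intro n
    have hε := cc_pos n
    have h := H.gronwall hσ hε ht
    have e : ∫ x, (br x + σ * x) ^ 2 * en p u t x * (qq σ x ^ 2 / (cc n + qq σ x ^ 2))
        = ∫ x, wt σ (cc n) x * en p u t x := by
      congr 1; funext x; rw [fr _ _ hε]; ring
    rw [e]
    refine h.trans ?_
    have g0 : Gr (wt σ (cc n)) := Gr.of_bdd (wt_cont hσ hε) (1 / cc n) fun x => by
      rw [abs_of_pos (wt_pos hε x)]; exact wt_le hε x
    apply mul_le_mul_of_nonneg_left _ (exp_pos _).le
    apply integral_mono (Dec.gr_mul g0 (H.decen _)).integrable (Dec.gr_mul gb (H.decen _)).integrable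
    intro x
    simp only
    rw [fr _ _ hε]
    have := frac_le (σ := σ) hε x
    have h5 := H.en_nonneg (t0 - σ) x
    apply mul_le_mul_of_nonneg_right _ h5
    exact mul_le_of_le_one_right (sq_nonneg _) this.2
  have hl := dct (Dec.gr_mul gb (H.decen t)) (m := fun n x => qq σ x ^ 2 / (cc n + qq σ x ^ 2))
    (m0 := fun _ => 1) (B := 1) (fun n => by
      have := cc_pos n
      exact ((qq_cont σ).pow 2).div (continuous_const.add ((qq_cont σ).pow 2))
        fun x => by positivity)
    (fun n x => by
      have := frac_le (σ := σ) (cc_pos n) x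
      rw [abs_of_nonneg this.1]; exact this.2)
    (fun x => by
      have h1 : qq σ x ^ 2 ≠ 0 := pow_ne_zero 2 (qq_ne hσ x)
      have := (tendsto_const_nhds (x := qq σ x ^ 2)).div (cc_tendsto.add_const (qq σ x ^ 2))
        (by simpa using h1)
      simp only [zero_add, div_self h1] at this
      exact this)
  simp only [mul_one] at hl
  exact le_of_tendsto' hl key

lemma x2_moment (H : Sol p M E u) (t0 : ℝ) : ∃ A, ∀ t, |t - t0| ≤ 1 →
    ∫ x, x ^ 2 * en p u t x ≤ A := by
  obtain ⟨A1, h1⟩ := H.br_moment (σ := 1) (by norm_num) t0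
  obtain ⟨A2, h2⟩ := H.br_moment (σ := -1) (by norm_num) t0
  refine ⟨A1 + A2, fun t ht => ?_⟩
  have gb : ∀ σ : ℝ, Gr (fun x => (br x + σ * x) ^ 2) := fun σ =>
    (br_gr.add ((Gr.const σ).mul Gr.id)).pow 2
  have i1 := (Dec.gr_mul (gb 1) (H.decen t)).integrable
  have i2 := (Dec.gr_mul (gb (-1)) (H.decen t)).integrable
  have i3 := (Dec.gr_mul (Gr.id.pow 2) (H.decen t)).integrable
  have : ∫ x, x ^ 2 * en p u t x ≤ (∫ x, (br x + 1 * x) ^ 2 * en p u t x)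
      + ∫ x, (br x + (-1) * x) ^ 2 * en p u t x := by
    rw [← integral_add i1 i2]
    apply integral_mono i3 (i1.add i2)
    intro x
    simp only [Pi.add_apply]
    rw [← add_mul]
    apply mul_le_mul_of_nonneg_right _ (H.en_nonneg t x)
    nlinarith [br_sq x, sq_nonneg x]
  linarith [h1 t ht, h2 t ht]

end Sol
end Virial


namespace Virial
open Filter Topology

lemma sin_sub_le (y : ℝ) : |sin y - y| ≤ y ^ 2 := by
  have h := (convex_Icc (-|y|) |y|).norm_image_sub_le_of_norm_hasDerivWithin_le
    (f := fun z : ℝ => sin z - z) (f' := fun z => cos z - 1) (C := |y|) (x := 0) (y := y)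
    (fun z _ => ((hasDerivAt_sin z).fun_sub (hasDerivAt_id' z)).hasDerivWithinAt)
    (fun z hz => by
      have h1 := Real.one_sub_sq_div_two_le_cos (x := z)
      have h2 := Real.cos_le_one z
      have h3 := Real.neg_one_le_cos z
      have h4 := abs_le.2 hz
      rw [norm_eq_abs, abs_of_nonpos (by linarith)]
      rcases le_or_gt 2 |y| with h | h
      · linarith
      · have := abs_nonneg z
        have := sq_abs z
        nlinarith)
    ⟨by simp, by simp⟩ ⟨neg_abs_le y, le_abs_self y⟩
  simp only [sin_zero, sub_zero, norm_eq_abs] at h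
  rwa [abs_mul_abs_self, ← pow_two] at h

lemma sin_div_tendsto (x : ℝ) : Tendsto (fun n => sin (cc n * x) / cc n) atTop (𝓝 x) := by
  rw [← tendsto_sub_nhds_zero_iff]
  have h : Tendsto (fun n => cc n * x ^ 2) atTop (𝓝 0) := by
    simpa using cc_tendsto.mul_const (x ^ 2)
  refine squeeze_zero_norm (fun n => ?_) h
  have hc := cc_pos n
  have e : sin (cc n * x) / cc n - x = (sin (cc n * x) - cc n * x) / cc n := by field_simp
  rw [e, norm_eq_abs, abs_div, abs_of_pos hc, div_le_iff₀ hc]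
  refine (sin_sub_le _).trans (le_of_eq (by ring))

namespace Sol
variable {p M E : ℝ} {u : ℝ → ℝ → ℝ}

lemma moment (H : Sol p M E u) {φ φ1 φ2 φ3 : ℕ → ℝ → ℝ} {Φ Φ1 : ℝ → ℝ}
    (h0 : ∀ n x, HasDerivAt (φ n) (φ1 n x) x) (h1 : ∀ n x, HasDerivAt (φ1 n) (φ2 n x) x)
    (h2 : ∀ n x, HasDerivAt (φ2 n) (φ3 n x) x)
    (b0 : ∀ n, ∃ B, ∀ x, |φ n x| ≤ B) (g1 : ∀ n, Gr (φ1 n)) (g2 : ∀ n, Gr (φ2 n))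
    (g3 : ∀ n, Gr (φ3 n)) (G1 : Gr Φ1)
    (hb : ∀ n x, |φ n x| ≤ 1 + x ^ 2) (hlim : ∀ x, Tendsto (fun n => φ n x) atTop (𝓝 (Φ x)))
    (hd1 : ∀ n x, |φ1 n x - Φ1 x| ≤ 2 * cc n * (1 + x ^ 2))
    (hd3 : ∀ n x, |φ3 n x| ≤ 2 * cc n) (t0 : ℝ) :
    HasDerivAt (fun s => ∫ x, Φ x * u s x ^ 2)
      (∫ x, (- (3 * (Φ1 x * u1 u t0 x ^ 2)) - 2 * p / (p + 1) * (Φ1 x * FF p u t0 x))) t0 := by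
  have hp := H.hp
  obtain ⟨A, hA⟩ := H.x2_moment t0
  have c0 : ∀ n, Continuous (φ n) := fun n =>
    continuous_iff_continuousAt.2 fun x => (h0 n x).continuousAt
  have g0 : ∀ n, Gr (φ n) := fun n => by
    obtain ⟨B, hB⟩ := b0 n
    exact Gr.of_bdd (c0 n) B hB
  have gx : Gr (fun x => 1 + x ^ 2) := (Gr.const 1).add (Gr.id.pow 2)
  let fn' : ℕ → ℝ → ℝ := fun n s => ∫ x, (φ3 n x * u s x ^ 2 - 3 * (φ1 n x * u1 u s x ^ 2)
    - 2 * p / (p + 1) * (φ1 n x * FF p u s x))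
  refine hasDerivAt_of_tendstoUniformlyOn (l := atTop)
    (f := fun n s => ∫ x, φ n x * u s x ^ 2) (f' := fn')
    (g' := fun s => ∫ x, (- (3 * (Φ1 x * u1 u s x ^ 2)) - 2 * p / (p + 1) * (Φ1 x * FF p u s x)))
    (s := Metric.ball t0 1) Metric.isOpen_ball ?_ (Eventually.of_forall fun n s _ => ?_)
    (fun s _ => ?_) (Metric.mem_ball_self one_pos)
  · let L := M + (6 + 2 * p) * (E + A)
    have hE : ∀ n s, s ∈ Metric.ball t0 1 →
        |(∫ x, (- (3 * (Φ1 x * u1 u s x ^ 2)) - 2 * p / (p + 1) * (Φ1 x * FF p u s x))) - fn' n s|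
          ≤ 2 * cc n * L := by
      intro n s hs
      have hc := cc_pos n
      have dG : Dec (fun x => - (3 * (Φ1 x * u1 u s x ^ 2))
          - 2 * p / (p + 1) * (Φ1 x * FF p u s x)) :=
        (Dec.gr_mul (Gr.const 3) (Dec.gr_mul G1 (H.dec1 s).sq)).neg.sub
          (Dec.gr_mul (Gr.const _) (Dec.gr_mul G1 (H.decF s)))
      have dn : Dec (fun x => φ3 n x * u s x ^ 2 - 3 * (φ1 n x * u1 u s x ^ 2)
          - 2 * p / (p + 1) * (φ1 n x * FF p u s x)) :=
        ((Dec.gr_mul (g3 n) (H.dec0 s).sq).sub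
          (Dec.gr_mul (Gr.const 3) (Dec.gr_mul (g1 n) (H.dec1 s).sq))).sub
          (Dec.gr_mul (Gr.const _) (Dec.gr_mul (g1 n) (H.decF s)))
      have iM := (H.dec0 s).sq.integrable
      have iE := (H.decen s).integrable
      have iX := (Dec.gr_mul (Gr.id.pow 2) (H.decen s)).integrable
      have iEX : Integrable (fun x => en p u s x + x ^ 2 * en p u s x) := iE.add iX
      have iEX' := iEX.const_mul (6 + 2 * p)
      have iS : Integrable (fun x => u s x ^ 2 + (6 + 2 * p) * (en p u s x + x ^ 2 * en p u s x)) :=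
        iM.add iEX'
      have hsA : ∫ x, x ^ 2 * en p u s x ≤ A := by
        apply hA
        rw [Metric.mem_ball, Real.dist_eq] at hs
        exact hs.le
      simp only [fn']
      rw [← integral_sub dG.integrable dn.integrable]
      refine (abs_integral_le_integral_abs).trans ?_
      calc _ ≤ ∫ x, 2 * cc n * (u s x ^ 2 + (6 + 2 * p) * (en p u s x + x ^ 2 * en p u s x)) := by
            apply integral_mono (dG.sub dn).integrable.abs (iS.const_mul _)
            intro x
            simp only
            have hF := FF_nonneg (p := p) (u := u) s x
            have e : -(3 * (Φ1 x * u1 u s x ^ 2)) - 2 * p / (p + 1) * (Φ1 x * FF p u s x)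
                - (φ3 n x * u s x ^ 2 - 3 * (φ1 n x * u1 u s x ^ 2)
                  - 2 * p / (p + 1) * (φ1 n x * FF p u s x))
                = - φ3 n x * u s x ^ 2 + (φ1 n x - Φ1 x) *
                  (3 * u1 u s x ^ 2 + 2 * p / (p + 1) * FF p u s x) := by ring
            have hpos : 0 ≤ 3 * u1 u s x ^ 2 + 2 * p / (p + 1) * FF p u s x := by positivity
            have hle : 3 * u1 u s x ^ 2 + 2 * p / (p + 1) * FF p u s x
                ≤ (6 + 2 * p) * en p u s x := by
              have e2 : (6 + 2 * p) * en p u s x = 3 * u1 u s x ^ 2 + 2 * p / (p + 1) * FF p u s x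
                  + (6 * (FF p u s x / (p + 1)) + p * u1 u s x ^ 2) := by
                simp only [en]; ring
              rw [e2]
              have : 0 ≤ 6 * (FF p u s x / (p + 1)) + p * u1 u s x ^ 2 := by positivity
              linarith
            rw [e]
            refine (abs_add_le _ _).trans ?_
            rw [abs_mul, abs_mul, abs_neg, abs_of_nonneg (sq_nonneg (u s x)), abs_of_nonneg hpos]
            calc _ ≤ 2 * cc n * u s x ^ 2
                  + (2 * cc n * (1 + x ^ 2)) * ((6 + 2 * p) * en p u s x) := by
                  have := hd1 n x
                  have := hd3 n x
                  gcongr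
              _ = _ := by ring
        _ = 2 * cc n * (M + (6 + 2 * p) * (E + ∫ x, x ^ 2 * en p u s x)) := by
            rw [integral_const_mul, integral_add iM iEX', integral_const_mul, integral_add iE iX,
              H.E_eq, ← H.hM s]
        _ ≤ _ := by simp only [L]; gcongr
    rw [Metric.tendstoUniformlyOn_iff]
    intro δ hδ
    have hl : Tendsto (fun n => 2 * cc n * L) atTop (𝓝 0) := by
      have := (cc_tendsto.const_mul 2).mul_const L
      simpa using this
    filter_upwards [hl.eventually_lt_const hδ] with n hn s hs
    rw [Real.dist_eq]
    exact (hE n s hs).trans_lt hn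
  · obtain ⟨B, hB⟩ := b0 n
    refine (H.hasDerivAt_V (c0 n) hB s).congr_deriv ?_
    exact H.V_ibp (h0 n) (h1 n) (h2 n) (g0 n) (g1 n) (g2 n) (g3 n) s
  · have := dct (Dec.gr_mul gx (H.dec0 s).sq) (m := fun n x => φ n x / (1 + x ^ 2))
      (m0 := fun x => Φ x / (1 + x ^ 2)) (B := 1)
      (fun n => (c0 n).div gx.1 fun x => by positivity)
      (fun n x => by
        rw [abs_div, abs_of_pos (by positivity : 0 < 1 + x ^ 2), div_le_one (by positivity)]
        exact hb n x)
      (fun x => (hlim x).div_const _)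
    have e : ∀ f : ℝ → ℝ, (∫ x, (1 + x ^ 2) * u s x ^ 2 * (f x / (1 + x ^ 2)))
        = ∫ x, f x * u s x ^ 2 := by
      intro f
      congr 1; funext x
      have : 1 + x ^ 2 ≠ 0 := by positivity
      field_simp
    simp only [e] at this
    exact this

lemma resc_sin (c x : ℝ) : HasDerivAt (fun x => sin (c * x)) (c * cos (c * x)) x := by
  have := ((hasDerivAt_id' x).const_mul c).sin
  refine this.congr_deriv (by ring)
lemma resc_cos (c x : ℝ) : HasDerivAt (fun x => cos (c * x)) (-(c * sin (c * x))) x := by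
  have := ((hasDerivAt_id' x).const_mul c).cos
  refine this.congr_deriv (by ring)
lemma gr_sin (c : ℝ) : Gr (fun x => sin (c * x)) :=
  Gr.of_bdd (by fun_prop) 1 fun x => abs_sin_le_one _
lemma gr_cos (c : ℝ) : Gr (fun x => cos (c * x)) :=
  Gr.of_bdd (by fun_prop) 1 fun x => abs_cos_le_one _

lemma moment1 (H : Sol p M E u) (t0 : ℝ) :
    HasDerivAt (fun s => ∫ x, x * u s x ^ 2)
      (∫ x, (- (3 * (1 * u1 u t0 x ^ 2)) - 2 * p / (p + 1) * (1 * FF p u t0 x))) t0 := by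
  refine H.moment (Φ := fun x => x) (Φ1 := fun _ => 1)
    (φ := fun n x => sin (cc n * x) / cc n) (φ1 := fun n x => cos (cc n * x))
    (φ2 := fun n x => - (cc n * sin (cc n * x))) (φ3 := fun n x => - (cc n * (cc n * cos (cc n * x))))
    (fun n x => ?_) (fun n x => resc_cos _ _) (fun n x => ((resc_sin _ x).const_mul _).fun_neg)
    (fun n => ⟨1 / cc n, fun x => ?_⟩) (fun n => gr_cos _)
    (fun n => ((Gr.const _).mul (gr_sin _)).neg)
    (fun n => ((Gr.const _).mul ((Gr.const _).mul (gr_cos _))).neg) (Gr.const 1)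
    (fun n x => ?_) (fun x => sin_div_tendsto x) (fun n x => ?_) (fun n x => ?_) t0
  all_goals have hc := cc_pos n
  all_goals have hc1 := cc_le n
  · refine ((resc_sin _ x).div_const _).congr_deriv (by field_simp)
  · rw [abs_div, abs_of_pos hc]
    gcongr
    exact abs_sin_le_one _
  · rw [abs_div, abs_of_pos hc, div_le_iff₀ hc]
    refine (abs_sin_le_abs).trans ?_
    rw [abs_mul, abs_of_pos hc, mul_comm]
    gcongr
    nlinarith [sq_abs x, sq_nonneg (|x| - 1)]
  · have h1 := Real.one_sub_sq_div_two_le_cos (x := cc n * x)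
    have h2 := Real.cos_le_one (cc n * x)
    rw [abs_of_nonpos (by linarith)]
    have h3 : (cc n * x) ^ 2 ≤ cc n * x ^ 2 := by
      calc (cc n * x) ^ 2 = cc n * (cc n * x ^ 2) := by ring
        _ ≤ cc n * (1 * x ^ 2) := by gcongr
        _ = _ := by ring
    nlinarith [mul_nonneg hc.le (sq_nonneg x)]
  · rw [abs_neg, abs_mul, abs_mul, abs_of_pos hc]
    calc cc n * (cc n * |cos (cc n * x)|) ≤ cc n * (1 * 1) := by
          gcongr; exact abs_cos_le_one _
      _ ≤ _ := by linarith

lemma moment2 (H : Sol p M E u) (t0 : ℝ) :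
    HasDerivAt (fun s => ∫ x, x ^ 2 * u s x ^ 2)
      (∫ x, (- (3 * ((2 * x) * u1 u t0 x ^ 2)) - 2 * p / (p + 1) * ((2 * x) * FF p u t0 x))) t0 := by
  have half : ∀ (n : ℕ) (x : ℝ), (2 - 2 * cos (cc n * x)) / cc n ^ 2
      = (sin (cc n * (x / 2)) / cc n * 2) ^ 2 := by
    intro n x
    have := cc_pos n
    have h := Real.cos_sq_add_sin_sq (cc n * (x / 2))
    rw [show cc n * x = 2 * (cc n * (x / 2)) by ring, Real.cos_two_mul]
    rw [mul_pow, div_pow, show sin (cc n * (x / 2)) ^ 2 = 1 - cos (cc n * (x / 2)) ^ 2 by linarith]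
    ring
  refine H.moment (Φ := fun x => x ^ 2) (Φ1 := fun x => 2 * x)
    (φ := fun n x => (2 - 2 * cos (cc n * x)) / cc n ^ 2)
    (φ1 := fun n x => 2 * (sin (cc n * x) / cc n))
    (φ2 := fun n x => 2 * cos (cc n * x)) (φ3 := fun n x => 2 * - (cc n * sin (cc n * x)))
    (fun n x => ?_) (fun n x => ?_) (fun n x => (resc_cos _ x).const_mul _)
    (fun n => ⟨4 / cc n ^ 2, fun x => ?_⟩) (fun n => ?_)
    (fun n => (Gr.const _).mul (gr_cos _))
    (fun n => (Gr.const _).mul ((Gr.const _).mul (gr_sin _)).neg) ((Gr.const 2).mul Gr.id)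
    (fun n x => ?_) (fun x => ?_) (fun n x => ?_) (fun n x => ?_) t0
  case refine_6 =>
    simp only [half]
    have := ((sin_div_tendsto (x / 2)).mul_const 2).pow 2
    refine this.trans (le_of_eq ?_)
    congr 1; ring
  all_goals have hc := cc_pos n
  all_goals have hc1 := cc_le n
  · refine ((((resc_cos _ x).const_mul 2).const_sub 2).div_const _).congr_deriv (by field_simp)
  · refine (((resc_sin _ x).div_const _).const_mul 2).congr_deriv (by field_simp)
  · rw [abs_div, abs_of_pos (pow_pos hc 2)]
    gcongr
    have h2 := Real.cos_le_one (cc n * x)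
    have h3 := Real.neg_one_le_cos (cc n * x)
    rw [abs_le]; constructor <;> linarith
  · have := (Gr.const 2).mul ((gr_sin (cc n)).mul (Gr.const (cc n)⁻¹))
    simpa [div_eq_mul_inv] using this
  · have h1 := Real.one_sub_sq_div_two_le_cos (x := cc n * x)
    have h2 := Real.cos_le_one (cc n * x)
    rw [abs_of_nonneg (div_nonneg (by linarith) (by positivity)), div_le_iff₀ (by positivity)]
    nlinarith [pow_pos hc 2]
  · have e : 2 * (sin (cc n * x) / cc n) - 2 * x = 2 * ((sin (cc n * x) - cc n * x) / cc n) := by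
      field_simp
    rw [e, abs_mul, abs_div, abs_of_pos hc, abs_two, mul_assoc]
    gcongr
    rw [div_le_iff₀ hc]
    refine (sin_sub_le _).trans ?_
    nlinarith [pow_pos hc 2]
  · rw [abs_mul, abs_two, abs_neg, abs_mul, abs_of_pos hc]
    have := abs_sin_le_one (cc n * x)
    nlinarith

end Sol
end Virial


namespace Virial
open Filter Topology
namespace Sol
variable {p M E : ℝ} {u : ℝ → ℝ → ℝ}

lemma final (H : Sol p M E u) (hM0 : M ≠ 0) (hE0 : E ≠ 0) {xM xE : ℝ → ℝ}
    (hxM : ∀ t : ℝ, xM t = (1 / M) * ∫ x : ℝ, x * (u t x) ^ 2)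
    (hxE : ∀ t : ℝ, xE t = (1 / E) * ∫ x : ℝ, x * en p u t x) (t : ℝ) :
    HasDerivAt (fun s => ∫ x : ℝ, (x - xM s) ^ 2 * (u s x) ^ 2)
        (-12 * E * (xE t - xM t)
          - (4 * p - 12) / (p + 1) * ∫ x : ℝ, (x - xM t) * FF p u t x) t := by
  have hp := H.hp
  have hp1 : p + 1 ≠ 0 := by linarith
  have e : (fun s => ∫ x : ℝ, (x - xM s) ^ 2 * (u s x) ^ 2)
      = fun s => (∫ x, x ^ 2 * u s x ^ 2) - (1 / M) * (∫ x, x * u s x ^ 2) ^ 2 := by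
    funext s
    have i0 := (H.dec0 s).sq.integrable.const_mul (xM s ^ 2)
    have i1 := (Dec.gr_mul Gr.id (H.dec0 s).sq).integrable.const_mul (2 * xM s)
    have i2 := (Dec.gr_mul (Gr.id.pow 2) (H.dec0 s).sq).integrable
    have i3 : Integrable (fun x => x ^ 2 * u s x ^ 2 - 2 * xM s * (x * u s x ^ 2)) := i2.sub i1
    have : (fun x => (x - xM s) ^ 2 * (u s x) ^ 2) = fun x =>
      x ^ 2 * u s x ^ 2 - 2 * xM s * (x * u s x ^ 2) + xM s ^ 2 * u s x ^ 2 := by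
      funext x; ring
    rw [this, integral_add i3 i0, integral_sub i2 i1, integral_const_mul, integral_const_mul,
      ← H.hM s, hxM s]
    field_simp
    ring
  rw [e]
  refine ((H.moment2 t).fun_sub (((H.moment1 t).fun_pow 2).const_mul _)).congr_deriv ?_
  have j1 := (H.dec1 t).sq.integrable
  have jF := (H.decF t).integrable
  have k1 := (Dec.gr_mul Gr.id (H.dec1 t).sq).integrable
  have kF := (Dec.gr_mul Gr.id (H.decF t)).integrable
  have q1 : ∫ x, (- (3 * (1 * u1 u t x ^ 2)) - 2 * p / (p + 1) * (1 * FF p u t x))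
      = -3 * (∫ x, u1 u t x ^ 2) - 2 * p / (p + 1) * ∫ x, FF p u t x := by
    rw [← integral_const_mul, ← integral_const_mul,
      ← integral_sub (j1.const_mul _) (jF.const_mul _)]
    congr 1; funext x; ring
  have q2 : ∫ x, (- (3 * ((2 * x) * u1 u t x ^ 2)) - 2 * p / (p + 1) * ((2 * x) * FF p u t x))
      = -6 * (∫ x, x * u1 u t x ^ 2) - 4 * p / (p + 1) * ∫ x, x * FF p u t x := by
    rw [← integral_const_mul, ← integral_const_mul,
      ← integral_sub (k1.const_mul _) (kF.const_mul _)]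
    congr 1; funext x; ring
  have q3 : ∫ x, (x - xM t) * FF p u t x = (∫ x, x * FF p u t x) - xM t * ∫ x, FF p u t x := by
    rw [← integral_const_mul, ← integral_sub kF (jF.const_mul _)]
    congr 1; funext x; ring
  have q4 : E = 1 / 2 * (∫ x, u1 u t x ^ 2) + 1 / (p + 1) * ∫ x, FF p u t x := by
    rw [← H.E_eq t, ← integral_const_mul, ← integral_const_mul,
      ← integral_add (j1.const_mul _) (jF.const_mul _)]
    congr 1; funext x; simp only [en]; ring
  have q5 : E * xE t = 1 / 2 * (∫ x, x * u1 u t x ^ 2) + 1 / (p + 1) * ∫ x, x * FF p u t x := by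
    rw [hxE t, ← mul_assoc, mul_one_div_cancel hE0, one_mul, ← integral_const_mul,
      ← integral_const_mul, ← integral_add (k1.const_mul _) (kF.const_mul _)]
    congr 1; funext x; simp only [en]; ring
  have q6 : M * xM t = ∫ x, x * u t x ^ 2 := by
    rw [hxM t, ← mul_assoc, mul_one_div_cancel hM0, one_mul]
  rw [q1, q2, q3, ← q6]
  have q7 : -12 * E * (xE t - xM t) = -12 * (E * xE t) + 12 * (E) * xM t := by ring
  rw [q7, q5, q4]
  field_simp
  norm_num
  ring

end Sol
end Virial

/-- **Virial-type identity.** For `p > 1` and a nonzero global Schwartz solution `u` of the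
defocusing gKdV equation, with conserved (nonzero) mass `M` and energy `E`, the time
derivative of the second moment about the center of mass `⟨x⟩_M` equals
`−12 E (⟨x⟩_E − ⟨x⟩_M) − ((4p − 12)/(p+1)) ∫ (x − ⟨x⟩_M) |u|^{p+1} dx`. -/
theorem virial_identity_gKdV
    (p : ℝ) (hp : 1 < p)
    (u : ℝ → ℝ → ℝ)
    (hsmooth : ContDiff ℝ (⊤ : ℕ∞) (fun q : ℝ × ℝ => u q.1 q.2))
    (hschwartz : ∀ t : ℝ, ∃ f : SchwartzMap ℝ ℝ, ∀ x : ℝ, u t x = f x)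
    (hpde : ∀ t x : ℝ,
      deriv (fun s => u s x) t + iteratedDeriv 3 (fun y => u t y) x
        = deriv (fun y => |u t y| ^ (p - 1) * u t y) x)
    (hnz : u ≠ 0)
    (M E : ℝ) (hM0 : M ≠ 0) (hE0 : E ≠ 0)
    (hM : ∀ t : ℝ, M = ∫ x : ℝ, (u t x) ^ 2)
    (hE : ∀ t : ℝ, E = ∫ x : ℝ,
      ((1 / 2) * (deriv (fun y => u t y) x) ^ 2 + |u t x| ^ (p + 1) / (p + 1)))
    -- the center of mass and the center of energy
    (xM xE : ℝ → ℝ)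
    (hxM : ∀ t : ℝ, xM t = (1 / M) * ∫ x : ℝ, x * (u t x) ^ 2)
    (hxE : ∀ t : ℝ, xE t = (1 / E) * ∫ x : ℝ,
      x * ((1 / 2) * (deriv (fun y => u t y) x) ^ 2 + |u t x| ^ (p + 1) / (p + 1))) :
    ∀ t : ℝ,
      HasDerivAt (fun s => ∫ x : ℝ, (x - xM s) ^ 2 * (u s x) ^ 2)
        (-12 * E * (xE t - xM t)
          - (4 * p - 12) / (p + 1) * ∫ x : ℝ, (x - xM t) * |u t x| ^ (p + 1)) t := by
  have H : Virial.Sol p M E u := ⟨hp, hsmooth, hschwartz, hpde, hM, hE⟩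
  exact fun t => H.final hM0 hE0 hxM hxE t
end

section
/- Let p > 1 and c ∈ ℝ. There is no nonzero Schwartz function Q : ℝ → ℝ satisfying the traveling-wave equation Q''(x) = c Q(x) + |Q(x)|^{p-1} Q(x) for all x ∈ ℝ. Consequently the defocusing generalized KdV equation ∂_t u + ∂_x^3 u = ∂_x(|u|^{p-1} u) admits no nonzero traveling-wave Schwartz solution u(t,x) = Q(x − ct). -/
open MeasureTheory Real


lemma aux_zero (Q : SchwartzMap ℝ ℝ) : Filter.Tendsto (fun x => Q x) (Filter.cocompact ℝ) (nhds 0) :=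
  zero_at_infty Q

lemma aux_const (f : ℝ → ℝ) (hf : ∀ x, HasDerivAt f 0 x)
    (h0 : Filter.Tendsto f (Filter.cocompact ℝ) (nhds 0)) (x : ℝ) : f x = 0 := by
  have hc : ∀ y, f y = f x := fun y =>
    is_const_of_deriv_eq_zero (fun z => (hf z).differentiableAt) (fun z => (hf z).deriv) y x
  have h1 : Filter.Tendsto f (Filter.cocompact ℝ) (nhds (f x)) := by
    rw [show f = fun _ => f x from funext hc]
    exact tendsto_const_nhds
  exact tendsto_nhds_unique h1 h0

lemma aux_diff (p : ℝ) (hp : 1 < p) (x : ℝ) :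
    DifferentiableAt ℝ (fun y : ℝ => |y| ^ (p - 1) * y) x := by
  by_cases hx : x = 0
  · subst hx
    have : HasDerivAt (fun y : ℝ => |y| ^ (p - 1) * y) 0 0 := by
      rw [hasDerivAt_iff_tendsto_slope_zero]
      have h : Filter.Tendsto (fun y : ℝ => |y| ^ (p - 1)) (nhdsWithin 0 {0}ᶜ) (nhds 0) := by
        have hc : Continuous (fun y : ℝ => |y| ^ (p - 1)) :=
          continuous_abs.rpow_const (fun _ => Or.inr (by linarith))
        have := hc.tendsto 0
        rw [abs_zero, Real.zero_rpow (by linarith)] at this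
        exact this.mono_left nhdsWithin_le_nhds
      refine h.congr' ?_
      filter_upwards [self_mem_nhdsWithin] with y hy
      have hy' : y ≠ 0 := hy
      simp only [zero_add, mul_zero, sub_zero, smul_eq_mul]
      field_simp
    exact this.differentiableAt
  · exact (((differentiableAt_abs hx)).rpow_const (Or.inl (abs_ne_zero.2 hx))).mul differentiableAt_id

lemma aux_ode (p : ℝ) (hp : 1 < p) (c : ℝ) (Q Q1 Q2 : SchwartzMap ℝ ℝ)
    (h1 : ∀ x, HasDerivAt Q (Q1 x) x) (h2 : ∀ x, HasDerivAt Q1 (Q2 x) x)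
    (h : ∀ x, Q2 x = c * Q x + |Q x| ^ (p - 1) * Q x) : Q = 0 := by
  have hE : ∀ x, (Q1 x) ^ 2 - c * (Q x) ^ 2 - 2 / (p + 1) * |Q x| ^ (p + 1) = 0 := by
    apply aux_const
    · intro x
      have ha := (hasDerivAt_abs_rpow (Q x) (show 1 < p + 1 by linarith)).comp x (h1 x)
      have hb := (((h2 x).pow 2).sub (((h1 x).pow 2).const_mul c)).sub (ha.const_mul (2 / (p + 1)))
      refine hb.congr_deriv ?_
      rw [h x, show p + 1 - 2 = p - 1 by ring]
      have : p + 1 ≠ 0 := by linarith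
      field_simp
      ring
    · have ha : Filter.Tendsto (fun x => |Q x| ^ (p + 1)) (Filter.cocompact ℝ) (nhds 0) := by
        have := (aux_zero Q).abs.rpow_const (p := p + 1) (Or.inr (by linarith))
        rwa [abs_zero, Real.zero_rpow (by linarith)] at this
      simpa using (((aux_zero Q1).pow 2).sub (((aux_zero Q).pow 2).const_mul c)).sub
        (ha.const_mul (2 / (p + 1)))
  have hE' : ∀ x, (Q1 x) ^ 2 = (Q x) ^ 2 * (c + 2 / (p + 1) * |Q x| ^ (p - 1)) := by
    intro x
    have := hE x
    have hr : |Q x| ^ (p + 1) = |Q x| ^ (p - 1) * (Q x) ^ 2 := by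
      by_cases hq : Q x = 0
      · rw [hq, abs_zero, Real.zero_rpow (by linarith)]; simp
      · rw [show p + 1 = (p - 1) + (2 : ℕ) by push_cast; ring,
          Real.rpow_add_natCast (abs_ne_zero.2 hq), sq_abs]
    rw [hr] at this
    linear_combination this
  by_contra hne
  obtain ⟨x0, hx0⟩ : ∃ x, Q x ≠ 0 := by
    by_contra hcon
    push Not at hcon
    exact hne (SchwartzMap.ext hcon)
  obtain ⟨m, hm⟩ : ∃ m, ∀ y, |Q y| ≤ |Q m| := by
    refine (Q.continuous.abs).exists_forall_ge' x0 ?_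
    have := (aux_zero Q).abs
    rw [abs_zero] at this
    exact (this.eventually_lt_const (abs_pos.2 hx0)).mono fun _ h => h.le
  have hmne : 0 < |Q m| := lt_of_lt_of_le (abs_pos.2 hx0) (hm x0)
  have hQ1m : Q1 m = 0 := by
    have hl : IsLocalMax (fun y => (Q y) ^ 2) m :=
      Filter.Eventually.of_forall fun y => sq_le_sq.2 (hm y)
    have := hl.hasDerivAt_eq_zero ((h1 m).pow 2)
    have hq : Q m ≠ 0 := abs_pos.1 hmne
    simpa [hq] using this
  have hcm : c + 2 / (p + 1) * |Q m| ^ (p - 1) = 0 := by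
    have := hE' m
    rw [hQ1m] at this
    have hq : Q m ≠ 0 := abs_pos.1 hmne
    simpa [hq] using this.symm
  have hz : ∀ x, Q1 x = 0 := by
    intro x
    have hle : |Q x| ^ (p - 1) ≤ |Q m| ^ (p - 1) :=
      Real.rpow_le_rpow (abs_nonneg _) (hm x) (by linarith)
    have hpos : 0 ≤ 2 / (p + 1) := by
      have : 0 < p + 1 := by linarith
      positivity
    have h3 := mul_le_mul_of_nonneg_left hle hpos
    have h4 : (Q1 x) ^ 2 ≤ 0 := by
      rw [hE' x]
      exact mul_nonpos_of_nonneg_of_nonpos (sq_nonneg _) (by linarith)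
    exact pow_eq_zero_iff (two_ne_zero) |>.1 (le_antisymm h4 (sq_nonneg _))
  exact hx0 (aux_const Q (fun x => by simpa [hz x] using h1 x) (aux_zero Q) x0)

lemma aux_deriv (Q : SchwartzMap ℝ ℝ) :
    ∃ Q1 : SchwartzMap ℝ ℝ, (∀ x, HasDerivAt Q (Q1 x) x) ∧ deriv (fun y => Q y) = fun y => Q1 y := by
  refine ⟨SchwartzMap.derivCLM ℝ ℝ Q, fun x => ?_, ?_⟩
  · rw [SchwartzMap.derivCLM_apply]
    exact Q.differentiableAt.hasDerivAt
  · funext x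
    rw [SchwartzMap.derivCLM_apply]

/-- **No defocusing solitons.** For `p > 1` and `c ∈ ℝ`, there is no nonzero real Schwartz
function `Q` satisfying the traveling-wave ODE `Q'' = cQ + |Q|^{p−1}Q`; consequently the
defocusing gKdV equation `∂ₜu + ∂ₓ³u = ∂ₓ(|u|^{p−1}u)` admits no nonzero traveling-wave
Schwartz solution `u(t,x) = Q(x − ct)`. -/
theorem no_defocusing_soliton
    (p : ℝ) (hp : 1 < p) (c : ℝ) :
    (∀ Q : SchwartzMap ℝ ℝ,
        (∀ x : ℝ, iteratedDeriv 2 (fun y => Q y) x = c * Q x + |Q x| ^ (p - 1) * Q x)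
        → Q = 0) ∧
      (∀ Q : SchwartzMap ℝ ℝ,
        (∀ t x : ℝ,
          deriv (fun s => Q (x - c * s)) t
            + iteratedDeriv 3 (fun y => Q (y - c * t)) x
          = deriv (fun y => |Q (y - c * t)| ^ (p - 1) * Q (y - c * t)) x)
        → Q = 0) := by
  constructor
  · intro Q h
    obtain ⟨Q1, h1, e1⟩ := aux_deriv Q
    obtain ⟨Q2, h2, e2⟩ := aux_deriv Q1
    refine aux_ode p hp c Q Q1 Q2 h1 h2 fun x => ?_
    rw [← h x, iteratedDeriv_succ, iteratedDeriv_one, e1, e2]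
  · intro Q h
    obtain ⟨Q1, h1, e1⟩ := aux_deriv Q
    obtain ⟨Q2, h2, e2⟩ := aux_deriv Q1
    obtain ⟨Q3, h3, e3⟩ := aux_deriv Q2
    refine aux_ode p hp c Q Q1 Q2 h1 h2 fun x => ?_
    have key : ∀ x, Q2 x - c * Q x - |Q x| ^ (p - 1) * Q x = 0 := by
      apply aux_const
      · intro x
        have hx := h 0 x
        simp only [mul_zero, sub_zero] at hx
        have hd : deriv (fun s => Q (x - c * s)) 0 = Q1 x * (-c) := by
          have hi : HasDerivAt (fun s : ℝ => x - c * s) (-c) 0 := by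
            simpa using ((hasDerivAt_id (0 : ℝ)).const_mul c).const_sub x
          have ho : HasDerivAt Q (Q1 x) (x - c * 0) := by simpa using h1 x
          exact (ho.comp (0 : ℝ) hi).deriv
        have h30 : iteratedDeriv 3 (fun y => Q y) x = Q3 x := by
          rw [iteratedDeriv_succ, iteratedDeriv_succ, iteratedDeriv_one, e1, e2, e3]
        have hN : DifferentiableAt ℝ (fun y => |Q y| ^ (p - 1) * Q y) x :=
          (aux_diff p hp (Q x)).comp x (h1 x).differentiableAt
        rw [hd, h30] at hx
        refine (((h3 x).sub ((h1 x).const_mul c)).sub hN.hasDerivAt).congr_deriv ?_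
        rw [← hx]; ring
      · have ha : Filter.Tendsto (fun x => |Q x| ^ (p - 1)) (Filter.cocompact ℝ) (nhds 0) := by
          have := (aux_zero Q).abs.rpow_const (p := p - 1) (Or.inr (by linarith))
          rwa [abs_zero, Real.zero_rpow (by linarith)] at this
        simpa using ((aux_zero Q2).sub ((aux_zero Q).const_mul c)).sub (ha.mul (aux_zero Q))
    linarith [key x]
end
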